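/- arXiv:2506.08816 — 5 statements merged into one kernel-verified Lean document; each statement's English description precedes it below -/
import Mathlib

section
/- Let d ∈ ℕ, q ∈ (1,∞), and s ∈ Int(S_d), and let p be the conjugate exponent with 1/p + 1/q = 1. Then, as b → 0, the squared L^q norm of the Dirichlet kernel satisfies ‖κ_{s,b}‖_q² = (∫_{S_d} κ_{s,b}^q(x) dx)^{2/q} = [b^{−d/p} ψ^{2/p}(s) / (2^{−d/p} q^{d/q})] (1 + O_s(b)). -/
open MeasureTheory Filter Asymptotics Real Topology

noncomputable section

/-- The `d`-dimensional simplex `S_d = {s ∈ [0,1]^d : ‖s‖₁ ≤ 1}`. -/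
def Sd (d : ℕ) : Set (Fin d → ℝ) :=
  {s | (∀ i, s i ∈ Set.Icc (0 : ℝ) 1) ∧ ∑ i, |s i| ≤ 1}

/-- The interior of the simplex, `Int(S_d) = {s ∈ (0,1)^d : ‖s‖₁ < 1}`. -/
def SdInt (d : ℕ) : Set (Fin d → ℝ) :=
  {s | (∀ i, s i ∈ Set.Ioo (0 : ℝ) 1) ∧ ∑ i, |s i| < 1}

/-- The Dirichlet(u, v) density on the simplex, evaluated at `x`. -/
def dirK (d : ℕ) (u : Fin d → ℝ) (v : ℝ) (x : Fin d → ℝ) : ℝ :=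
  (Real.Gamma (∑ i, u i + v) / (Real.Gamma v * ∏ i, Real.Gamma (u i))) *
    (1 - ∑ i, x i) ^ (v - 1) * ∏ i, (x i) ^ (u i - 1)

/-- The Dirichlet kernel `κ_{s,b} = K_{s/b+1, (1-‖s‖₁)/b+1}`. -/
def kappa (d : ℕ) (s : Fin d → ℝ) (b : ℝ) (x : Fin d → ℝ) : ℝ :=
  dirK d (fun i => s i / b + 1) ((1 - ∑ i, s i) / b + 1) x

/-- `ψ(s) = (4π)^{-d/2} / ((1-‖s‖₁)^{1/2} ∏ s_i^{1/2})`. -/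
def psiFun (d : ℕ) (s : Fin d → ℝ) : ℝ :=
  (4 * π) ^ (-(d : ℝ) / 2) /
    ((1 - ∑ i, s i) ^ ((1 : ℝ) / 2) * ∏ i, (s i) ^ ((1 : ℝ) / 2))

/-- The Dirichlet kernel density estimator `f̂_{n,b}(s)`. -/
def fhat {Ω : Type*} (d n : ℕ) (b : ℝ) (X : ℕ → Ω → (Fin d → ℝ))
    (s : Fin d → ℝ) (ω : Ω) : ℝ :=
  (n : ℝ)⁻¹ * ∑ i ∈ Finset.Icc 1 n, kappa d s b (X i ω)

/-- The strong mixing (α-mixing) coefficient of the sequence `X`. -/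
def alphaMix {Ω : Type*} [MeasurableSpace Ω] (P : Measure Ω)
    {d : ℕ} (X : ℕ → Ω → (Fin d → ℝ)) (m : ℕ) : ℝ :=
  sSup {r : ℝ | ∃ k : ℕ, 1 ≤ k ∧ ∃ A B : Set Ω,
    MeasurableSet[⨆ i ∈ Set.Icc 1 k, MeasurableSpace.comap (X i) inferInstance] A ∧
    MeasurableSet[⨆ i ∈ Set.Ici (k + m), MeasurableSpace.comap (X i) inferInstance] B ∧
    r = |(P (A ∩ B)).toReal - (P A).toReal * (P B).toReal|}

/-- Strict stationarity of the sequence `X` (indexed from 1). -/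
def IsStrictlyStationary {Ω : Type*} [MeasurableSpace Ω] (P : Measure Ω)
    {d : ℕ} (X : ℕ → Ω → (Fin d → ℝ)) : Prop :=
  ∀ k n : ℕ,
    Measure.map (fun ω => fun t : Fin n => X (t.1 + 1 + k) ω) P =
      Measure.map (fun ω => fun t : Fin n => X (t.1 + 1) ω) P

/-- Covariance of two real random variables. -/
def cov {Ω : Type*} [MeasurableSpace Ω] (P : Measure Ω) (Y Z : Ω → ℝ) : ℝ :=
  ∫ ω, Y ω * Z ω ∂P - (∫ ω, Y ω ∂P) * (∫ ω, Z ω ∂P)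

/-- The bias functional `g(s)` from Theorem MSE. -/
def gfun (d : ℕ) (f : (Fin d → ℝ) → ℝ) (s : Fin d → ℝ) : ℝ :=
  (∑ i, (1 - ((d : ℝ) + 1) * s i) * fderiv ℝ f s (Pi.single i 1)) +
    (1 / 2) * ∑ i, ∑ j, s i * ((if i = j then (1 : ℝ) else 0) - s j) *
      fderiv ℝ (fun t => fderiv ℝ f t (Pi.single i 1)) s (Pi.single j 1)

/-- The centered kernel variable `Ξ_{i,n}(s)`. -/
def Xi {Ω : Type*} [MeasurableSpace Ω] (P : Measure Ω) {d : ℕ}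
    (X : ℕ → Ω → (Fin d → ℝ)) (s : Fin d → ℝ) (b : ℝ) (i : ℕ) (ω : Ω) : ℝ :=
  kappa d s b (X i ω) - ∫ ω', kappa d s b (X i ω') ∂P

/-- The `j`-th big block of indices `I_j`. -/
def bigBlock (pn qn j : ℕ) : Finset ℕ :=
  Finset.Icc ((j - 1) * (pn + qn) + 1) ((j - 1) * (pn + qn) + pn)

/-- The `j`-th small block of indices `J_j`. -/
def smallBlock (pn qn j : ℕ) : Finset ℕ :=
  Finset.Icc ((j - 1) * (pn + qn) + pn + 1) (j * (pn + qn))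

/-- Assumption (A2): pairwise joint densities exist and the local dependence
functions `h_{i,j} = f_{X_i,X_j} - f_{X_i} f_{X_j}` have uniformly bounded `L^p` norms. -/
def AssumpA2 {Ω : Type*} [MeasurableSpace Ω] (P : Measure Ω) {d : ℕ}
    (X : ℕ → Ω → (Fin d → ℝ)) (f : (Fin d → ℝ) → ℝ) (p : ℝ) : Prop :=
  ∃ fpair : ℕ → ℕ → ((Fin d → ℝ) × (Fin d → ℝ)) → ℝ,
    (∀ i j : ℕ, 1 ≤ i → 1 ≤ j → i ≠ j →
      Measure.map (fun ω => (X i ω, X j ω)) P =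
        volume.withDensity (fun z => ENNReal.ofReal (fpair i j z))) ∧
    (∀ i j : ℕ, 1 ≤ i → 1 ≤ j → i ≠ j →
      Integrable (fun z => |fpair i j z - f z.1 * f z.2| ^ p)
        (volume.restrict (Sd d ×ˢ Sd d))) ∧
    ∃ C : ℝ, ∀ i j : ℕ, 1 ≤ i → 1 ≤ j → i ≠ j →
      (∫ z in Sd d ×ˢ Sd d, |fpair i j z - f z.1 * f z.2| ^ p) ^ (1 / p) ≤ C

/-- Stirling ratio `R(z) = √(2π) e^{-z} z^{z+1/2} / Γ(z+1)`. -/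
def Rfun (z : ℝ) : ℝ :=
  Real.sqrt (2 * π) * Real.exp (-z) * z ^ (z + 1 / 2) / Real.Gamma (z + 1)

end


noncomputable def gk (a y : ℝ) : ENNReal :=
  ENNReal.ofReal (if 0 < y then y ^ (a - 1) / Real.Gamma a else 0)

theorem gk_meas (a : ℝ) : Measurable (gk a) := by
  unfold gk
  exact (Measurable.ite measurableSet_Ioi (by fun_prop) (by fun_prop)).ennreal_ofReal

theorem gk_conv (a c t : ℝ) (ha : 0 < a) (hc : 0 < c) :
    ∫⁻ x, gk a x * gk c (t - x) = gk (a + c) t := by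
  rcases le_or_gt t 0 with ht | ht
  · have : ∀ x, gk a x * gk c (t - x) = 0 := by
      intro x
      unfold gk
      by_cases h : 0 < x
      · rw [if_neg (show ¬ 0 < t - x by linarith)]; simp
      · rw [if_neg h]; simp
    simp_rw [this]
    unfold gk
    rw [if_neg (not_lt.2 ht)]; simp
  · have hG := Real.Gamma_pos_of_pos ha
    have hG2 := Real.Gamma_pos_of_pos hc
    have hG3 := Real.Gamma_pos_of_pos (add_pos ha hc)
    have hm : Measurable (fun x => gk a x * gk c (t - x)) :=
      (gk_meas a).mul ((gk_meas c).comp (by fun_prop))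
    have key : ∀ y, gk a (t * y) * gk c (t - t * y) =
        ENNReal.ofReal (t ^ (a + c - 2) / Real.Gamma (a + c)) * ProbabilityTheory.betaPDF a c y := by
      intro y
      by_cases h : 0 < y ∧ y < 1
      · rw [ProbabilityTheory.betaPDF_of_pos_lt_one h.1 h.2]
        have h1 : 0 < 1 - y := by linarith [h.2]
        unfold gk
        rw [show t - t * y = t * (1 - y) by ring, if_pos (mul_pos ht h.1), if_pos (mul_pos ht h1),
          ← ENNReal.ofReal_mul (by have := h.1; positivity), ← ENNReal.ofReal_mul (by positivity)]
        congr 1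
        rw [Real.mul_rpow ht.le h.1.le, Real.mul_rpow ht.le h1.le,
          show a + c - 2 = (a - 1) + (c - 1) by ring, Real.rpow_add ht, ProbabilityTheory.beta]
        field_simp
      · have : ProbabilityTheory.betaPDF a c y = 0 := by
          rw [ProbabilityTheory.betaPDF_eq, if_neg h]; simp
        rw [this, mul_zero]
        unfold gk
        by_cases h' : 0 < y
        · have : ¬ 0 < t - t * y := by
            have : 1 ≤ y := by by_contra hh; exact h ⟨h', by linarith⟩
            nlinarith
          rw [if_neg this]; simp
        · rw [if_neg (show ¬ 0 < t * y by rw [mul_pos_iff_of_pos_left ht]; exact h')]; simp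
    have hmap := Real.smul_map_volume_mul_left ht.ne'
    rw [← hmap, lintegral_smul_measure, lintegral_map hm (by fun_prop)]
    simp_rw [key]
    rw [lintegral_const_mul _ (by
        have := ProbabilityTheory.measurable_betaPDFReal a c
        exact this.ennreal_ofReal),
      ProbabilityTheory.lintegral_betaPDF_eq_one ha hc, mul_one, smul_eq_mul,
      ← ENNReal.ofReal_mul (by positivity)]
    unfold gk
    rw [if_pos ht, abs_of_pos ht, show a + c - 1 = 1 + (a + c - 2) by ring, Real.rpow_add ht,
      Real.rpow_one, mul_div_assoc]

theorem gk_dirichlet (d : ℕ) : ∀ (u : Fin d → ℝ) (v t : ℝ), (∀ i, 0 < u i) → 0 < v →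
    ∫⁻ x : Fin d → ℝ, gk v (t - ∑ i, x i) * ∏ i, gk (u i) (x i) = gk (∑ i, u i + v) t := by
  induction d with
  | zero =>
    intro u v t _ _
    rw [lintegral_unique]
    simp [volume_pi, Measure.pi_of_empty]
  | succ n ih =>
    intro u v t hu hv
    have hm : ∀ (n : ℕ) (u : Fin n → ℝ) (t : ℝ), Measurable
        (fun x : Fin n → ℝ => gk v (t - ∑ i, x i) * ∏ i, gk (u i) (x i)) := by
      intro n u t
      refine ((gk_meas v).comp (by fun_prop)).mul ?_
      exact Finset.measurable_prod _ (fun i _ => (gk_meas (u i)).comp (by fun_prop))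
    have hmp := (volume_preserving_piFinSuccAbove (fun _ : Fin (n + 1) => ℝ) 0).symm
    rw [← hmp.lintegral_comp (hm (n+1) u t), Measure.volume_eq_prod, lintegral_prod]
    · simp only [MeasurableEquiv.piFinSuccAbove_symm_apply, Fin.insertNthEquiv_apply, Fin.insertNth_zero,
        Fin.sum_univ_succ, Fin.prod_univ_succ, Fin.cons_zero, Fin.cons_succ]
      have : ∀ x : ℝ, ∫⁻ y : Fin n → ℝ, gk v (t - (x + ∑ i, y i)) *
          (gk (u 0) x * ∏ i, gk (u i.succ) (y i)) =
          gk (u 0) x * gk (∑ i : Fin n, u i.succ + v) (t - x) := by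
        intro x
        rw [← ih (fun i => u i.succ) v (t - x) (fun i => hu _) hv,
          ← lintegral_const_mul _ (hm n _ _)]
        congr 1; ext y
        rw [← sub_sub]; ring
      refine (lintegral_congr this).trans ?_
      rw [gk_conv _ _ _ (hu 0) (by
        have : 0 ≤ ∑ i : Fin n, u i.succ := Finset.sum_nonneg (fun i _ => (hu _).le)
        linarith)]
      rw [add_assoc]
    · exact ((hm (n+1) u t).comp (MeasurableEquiv.measurable _)).aemeasurable

noncomputable def mus (z : ℝ) : ℝ :=
  log (Real.Gamma (z + 1)) - (z + 1 / 2) * log z + z - log (2 * π) / 2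

theorem mus_diff (z : ℝ) (hz : 0 < z) :
    mus z - mus (z + 1) = (z + 1 / 2) * log (1 + 1 / z) - 1 := by
  unfold mus
  have h1 : log (1 + 1 / z) = log (z + 1) - log z := by
    rw [← log_div (by positivity) (by positivity)]; congr 1; field_simp
  rw [h1, Real.Gamma_add_one (s := z + 1) (by positivity),
    log_mul (by positivity) (Real.Gamma_pos_of_pos (by positivity)).ne']
  ring

theorem mus_diff_lb (z : ℝ) (hz : 0 < z) : 0 ≤ mus z - mus (z + 1) := by
  rw [mus_diff z hz]
  have h := Real.le_log_one_add_of_nonneg (x := 1 / z) (by positivity)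
  have h2 : 2 * (1 / z) / (1 / z + 2) = 1 / (z + 1 / 2) := by field_simp; try ring
  rw [h2, div_le_iff₀ (by positivity)] at h
  linarith

theorem mus_diff_ub (z : ℝ) (hz : 0 < z) :
    mus z - mus (z + 1) ≤ (1 / z - 1 / (z + 1)) / 8 := by
  rw [mus_diff z hz]
  set w := 1 + 1 / z with hw
  have hw1 : 1 < w := by rw [hw]; have : 0 < 1 / z := by positivity
                         linarith
  have hs : 0 < √w := Real.sqrt_pos.2 (by linarith)
  have hsq : √w ^ 2 = w := Real.sq_sqrt (by linarith)
  have h1 : log (√w) ≤ (√w - (√w)⁻¹) / 2 := by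
    rw [← Real.sinh_log hs, Real.self_le_sinh_iff]
    exact Real.log_nonneg (Real.one_le_sqrt.2 hw1.le)
  rw [Real.log_sqrt (by linarith)] at h1
  have h2 : log w ≤ 1 / (z * √w) := by
    have : √w - (√w)⁻¹ = 1 / (z * √w) := by
      field_simp
      rw [hsq, hw]; field_simp; ring
    linarith
  set r := z * √w with hr
  have hr0 : 0 < r := by positivity
  have hr2 : r ^ 2 = z * (z + 1) := by
    rw [hr, mul_pow, hsq, hw]; field_simp
  have h3 : z + 1 / 2 ≤ r + 1 / (8 * r) := by
    apply le_of_sq_le_sq _ (by positivity)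
    have : (r + 1 / (8 * r)) ^ 2 = r ^ 2 + 1 / 4 + (1 / (8 * r)) ^ 2 := by field_simp; ring
    rw [this, hr2]
    nlinarith [sq_nonneg (1 / (8 * r))]
  have h4 : (z + 1 / 2) * log w ≤ (r + 1 / (8 * r)) * (1 / r) :=
    (mul_le_mul_of_nonneg_left h2 (by positivity)).trans
      (mul_le_mul_of_nonneg_right h3 (by positivity))
  have h5 : (r + 1 / (8 * r)) * (1 / r) = 1 + (1 / z - 1 / (z + 1)) / 8 := by
    have : (r + 1 / (8 * r)) * (1 / r) = 1 + 1 / (8 * r ^ 2) := by field_simp; try ring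
    rw [this, hr2]; field_simp; ring
  linarith

theorem mus_tele (z : ℝ) (hz : 0 < z) (n : ℕ) :
    0 ≤ mus z - mus (z + n) ∧ mus z - mus (z + n) ≤ (1 / z - 1 / (z + n)) / 8 := by
  induction n with
  | zero => simp
  | succ n ih =>
    have h1 := mus_diff_lb (z + n) (by positivity)
    have h2 := mus_diff_ub (z + n) (by positivity)
    push_cast
    rw [← add_assoc]
    constructor <;> linarith [ih.1, ih.2]

theorem Gamma_prod (z : ℝ) (hz : 0 < z) (n : ℕ) :
    Real.Gamma (z + n) = Real.Gamma z * ∏ j ∈ Finset.range n, (z + j) := by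
  induction n with
  | zero => simp
  | succ n ih =>
    rw [Finset.prod_range_succ, ← mul_assoc, ← ih]
    push_cast
    rw [← add_assoc, Real.Gamma_add_one (by positivity), mul_comm]

theorem mus_lim (z : ℝ) (hz : 0 < z) : Tendsto (fun n : ℕ => mus (z + n)) atTop (𝓝 0) := by
  have hG := Real.Gamma_pos_of_pos hz
  have e1 : Tendsto (fun n : ℕ => log (Real.Gamma z) - log (Real.GammaSeq z n)) atTop (𝓝 0) := by
    have := ((Real.GammaSeq_tendsto_Gamma z).log hG.ne').const_sub (log (Real.Gamma z))
    simpa using this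
  have e2 : Tendsto (fun n : ℕ => log (Stirling.stirlingSeq n) - log (√π)) atTop (𝓝 0) := by
    have := (Stirling.tendsto_stirlingSeq_sqrt_pi.log (by positivity)).sub_const (log (√π))
    simpa using this
  have e3 : Tendsto (fun n : ℕ => (n : ℝ) * log (1 + z / n)) atTop (𝓝 z) :=
    (Real.tendsto_mul_log_one_add_div_atTop z).comp tendsto_natCast_atTop_atTop
  have e4 : Tendsto (fun n : ℕ => log (1 + z / n)) atTop (𝓝 0) := by
    have : Tendsto (fun n : ℕ => 1 + z / (n : ℝ)) atTop (𝓝 (1 + 0)) :=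
      (tendsto_const_div_atTop_nhds_zero_nat z).const_add 1
    simpa using this.log (by norm_num)
  have e5 := ((e1.add e2).sub e3).sub (e4.const_mul (z + 1 / 2)) |>.add_const z
  simp only [add_zero, zero_sub, mul_zero, sub_zero, neg_add_cancel] at e5
  refine e5.congr' ?_
  filter_upwards [eventually_ge_atTop 1] with n hn
  have hn0 : (0 : ℝ) < n := by exact_mod_cast hn
  have hp : 0 < ∏ j ∈ Finset.range (n + 1), (z + (j : ℝ)) :=
    Finset.prod_pos (fun j _ => by positivity)
  have hf : (0 : ℝ) < n.factorial := by exact_mod_cast n.factorial_pos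
  have hg : log (Real.Gamma (z + n + 1)) =
      log (Real.Gamma z) + log (∏ j ∈ Finset.range (n + 1), (z + (j : ℝ))) := by
    have := Gamma_prod z hz (n + 1)
    push_cast at this
    rw [← add_assoc] at this
    rw [this, log_mul hG.ne' hp.ne']
  have hl : log (1 + z / n) = log (z + n) - log n := by
    rw [← log_div (by positivity) (by positivity)]; congr 1; field_simp; ring
  unfold mus
  rw [hg, hl, Real.GammaSeq, Stirling.log_stirlingSeq_formula, log_div (by positivity) hp.ne',
    log_mul (by positivity) hf.ne', log_rpow hn0, log_mul two_ne_zero hn0.ne',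
    log_div hn0.ne' (by positivity), log_exp, log_mul two_ne_zero (by positivity),
    log_sqrt (by positivity)]
  ring

theorem mus_bound (z : ℝ) (hz : 0 < z) : |mus z| ≤ 1 / z := by
  have h0 : 0 ≤ mus z := by
    have h := (mus_lim z hz).const_sub (mus z)
    rw [sub_zero] at h
    exact ge_of_tendsto' h (fun n => (mus_tele z hz n).1)
  have h1 : mus z ≤ 1 / z := by
    have h := (mus_lim z hz).const_sub (mus z)
    rw [sub_zero] at h
    refine le_of_tendsto' h (fun n => (mus_tele z hz n).2.trans ?_)
    have : 0 < 1 / (z + n) := by positivity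
    have : 0 < 1 / z := by positivity
    linarith
  rwa [abs_of_nonneg h0]

noncomputable def Cst (d : ℕ) (s : Fin d → ℝ) (b : ℝ) : ℝ :=
  Real.Gamma (∑ i, (s i / b + 1) + ((1 - ∑ i, s i) / b + 1)) /
    (Real.Gamma ((1 - ∑ i, s i) / b + 1) * ∏ i, Real.Gamma (s i / b + 1))

noncomputable def Mst (d : ℕ) (s : Fin d → ℝ) (b : ℝ) : ℝ :=
  -(d : ℝ) / 2 * log b - (d : ℝ) / 2 * log (2 * π)
    - 1 / 2 * (log (1 - ∑ i, s i) + ∑ i, log (s i))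
    - (1 / b) * ((1 - ∑ i, s i) * log (1 - ∑ i, s i) + ∑ i, s i * log (s i))

theorem Cst_pos (d : ℕ) (s : Fin d → ℝ) (b : ℝ) (hs : ∀ i, 0 < s i) (hs0 : 0 < 1 - ∑ i, s i)
    (hb : 0 < b) : 0 < Cst d s b := by
  unfold Cst
  have h : ∀ i, 0 < s i / b + 1 := fun i => by have := hs i; positivity
  have h0 : 0 < (1 - ∑ i, s i) / b + 1 := by positivity
  have h1 : 0 ≤ ∑ i, (s i / b + 1) := Finset.sum_nonneg (fun i _ => (h i).le)
  refine div_pos (Real.Gamma_pos_of_pos (by linarith)) (mul_pos (Real.Gamma_pos_of_pos h0)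
    (Finset.prod_pos (fun i _ => Real.Gamma_pos_of_pos (h i))))

theorem log_Gamma_mus (c b : ℝ) (hc : 0 < c) (hb : 0 < b) :
    log (Real.Gamma (c / b + 1)) = mus (c / b) + (1 / b) * (c * log c) - (log b / b) * c
      + 1 / 2 * log c - 1 / 2 * log b - (1 / b) * c + log (2 * π) / 2 := by
  unfold mus
  rw [log_div hc.ne' hb.ne']
  ring

theorem log_Cst (d : ℕ) (s : Fin d → ℝ) (b : ℝ) (hs : ∀ i, 0 < s i) (hs0 : 0 < 1 - ∑ i, s i)
    (hb : 0 < b) : log (Cst d s b) - Mst d s b =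
      ∑ j ∈ Finset.range d, log (1 + (j + 1 : ℝ) * b) + mus (1 / b)
        - mus ((1 - ∑ i, s i) / b) - ∑ i, mus (s i / b) := by
  have h : ∀ i, 0 < s i / b + 1 := fun i => by have := hs i; positivity
  have h0 : 0 < (1 - ∑ i, s i) / b + 1 := by positivity
  have hG : ∀ i, Real.Gamma (s i / b + 1) ≠ 0 := fun i => (Real.Gamma_pos_of_pos (h i)).ne'
  have e : ∑ i, (s i / b + 1) + ((1 - ∑ i, s i) / b + 1) = (1 / b + 1) + d := by
    rw [Finset.sum_add_distrib, ← Finset.sum_div]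
    simp
    ring
  have hj : ∀ j ∈ Finset.range d, log (1 / b + 1 + (j : ℝ)) =
      log (1 + (j + 1 : ℝ) * b) - log b := by
    intro j _
    rw [← log_div (by positivity) (by positivity)]; congr 1; field_simp; ring
  have hpos1 : 0 < 1 / b + 1 := by positivity
  unfold Cst Mst
  rw [e, Gamma_prod _ hpos1, log_div, log_mul, log_mul, log_prod, log_prod,
    Finset.sum_congr rfl hj, log_Gamma_mus 1 b one_pos hb, log_Gamma_mus _ b hs0 hb,
    Finset.sum_congr rfl (fun i _ => log_Gamma_mus (s i) b (hs i) hb)]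
  · simp only [Finset.sum_add_distrib, Finset.sum_sub_distrib, ← Finset.mul_sum, Finset.sum_const,
      Finset.card_range, Finset.card_univ, Fintype.card_fin, nsmul_eq_mul, log_one]
    ring
  · exact fun i _ => hG i
  · intro j _; positivity
  · exact (Real.Gamma_pos_of_pos h0).ne'
  · exact Finset.prod_ne_zero_iff.2 (fun i _ => hG i)
  · exact (Real.Gamma_pos_of_pos hpos1).ne'
  · exact Finset.prod_ne_zero_iff.2 (fun i _ => by positivity)
  · exact mul_ne_zero (Real.Gamma_pos_of_pos hpos1).ne'
      (Finset.prod_ne_zero_iff.2 (fun i _ => by positivity))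
  · exact mul_ne_zero (Real.Gamma_pos_of_pos h0).ne' (Finset.prod_ne_zero_iff.2 (fun i _ => hG i))

theorem mus_bigO (c : ℝ) (hc : 0 < c) :
    (fun b : ℝ => mus (c / b)) =O[𝓝[>] (0 : ℝ)] (fun b => b) := by
  refine IsBigO.of_bound (1 / c) ?_
  filter_upwards [self_mem_nhdsWithin] with b hb
  have hb : 0 < b := hb
  have := mus_bound (c / b) (by positivity)
  rw [norm_eq_abs, norm_eq_abs, abs_of_pos hb]
  refine this.trans (le_of_eq ?_)
  field_simp

theorem log_bigO (c : ℝ) (hc : 0 < c) :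
    (fun b : ℝ => log (1 + c * b)) =O[𝓝[>] (0 : ℝ)] (fun b => b) := by
  refine IsBigO.of_bound c ?_
  filter_upwards [self_mem_nhdsWithin] with b hb
  have hb : 0 < b := hb
  have hcb : 0 < c * b := by positivity
  rw [norm_eq_abs, norm_eq_abs, abs_of_pos hb, abs_of_nonneg (log_nonneg (by linarith))]
  have := log_le_sub_one_of_pos (show 0 < 1 + c * b by positivity)
  linarith

theorem Cst_bigO (d : ℕ) (s : Fin d → ℝ) (hs : ∀ i, 0 < s i) (hs0 : 0 < 1 - ∑ i, s i) :
    (fun b => log (Cst d s b) - Mst d s b) =O[𝓝[>] (0 : ℝ)] (fun b => b) := by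
  have h1 : (fun b : ℝ => ∑ j ∈ Finset.range d, log (1 + (j + 1 : ℝ) * b) + mus (1 / b)
        - mus ((1 - ∑ i, s i) / b) - ∑ i, mus (s i / b)) =O[𝓝[>] (0 : ℝ)] (fun b => b) := by
    have a1 := IsBigO.sum (s := Finset.range d)
      (fun (j : ℕ) _ => log_bigO ((j : ℝ) + 1) (Nat.cast_add_one_pos j))
    have a2 := IsBigO.sum (s := (Finset.univ : Finset (Fin d)))
      (fun i _ => mus_bigO (s i) (hs i))
    have a3 := ((a1.add (mus_bigO 1 one_pos)).sub (mus_bigO _ hs0)).sub a2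
    simpa only [Finset.sum_apply] using a3
  refine h1.congr' ?_ EventuallyEq.rfl
  filter_upwards [self_mem_nhdsWithin] with b hb
  exact (log_Cst d s b hs hs0 hb).symm

theorem gk_of_nonneg (α y : ℝ) (hα : 0 < α) (hy : 0 ≤ y) :
    gk (α + 1) y = ENNReal.ofReal (y ^ α / Real.Gamma (α + 1)) := by
  unfold gk
  rw [add_sub_cancel_right]
  rcases hy.eq_or_lt with h | h
  · rw [← h]; simp [Real.zero_rpow hα.ne']
  · rw [if_pos h]

theorem gk_of_neg (α y : ℝ) (hy : y < 0) : gk α y = 0 := by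
  unfold gk
  rw [if_neg (by linarith)]; simp

theorem Sd_meas (d : ℕ) : MeasurableSet (Sd d) := by
  have h : IsClosed (Sd d) := by
    have e : Sd d = (⋂ i, (fun x : Fin d → ℝ => x i) ⁻¹' Set.Icc (0 : ℝ) 1) ∩
        {x | ∑ i, |x i| ≤ 1} := by
      ext x
      simp only [Sd, Set.mem_setOf_eq, Set.mem_inter_iff, Set.mem_iInter, Set.mem_preimage]
    rw [e]
    refine IsClosed.inter ?_ ?_
    · exact isClosed_iInter (fun i => isClosed_Icc.preimage (continuous_apply i))
    · exact isClosed_le (by fun_prop) continuous_const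
  exact h.measurableSet

theorem kappa_integral (d : ℕ) (s : Fin d → ℝ) (hs : ∀ i, 0 < s i) (hs0 : 0 < 1 - ∑ i, s i)
    (q b : ℝ) (hq : 0 < q) (hb : 0 < b) :
    ∫ x in Sd d, (kappa d s b x) ^ q = (Cst d s b) ^ q / Cst d s (b / q) := by
  have hC := Cst_pos d s b hs hs0 hb
  have hb' : 0 < b / q := by positivity
  have hC' := Cst_pos d s (b / q) hs hs0 hb'
  set u : Fin d → ℝ := fun i => s i / (b / q) with hu
  set v : ℝ := (1 - ∑ i, s i) / (b / q) with hv
  have hu0 : ∀ i, 0 < u i := fun i => div_pos (hs i) hb'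
  have hv0 : 0 < v := div_pos hs0 hb'
  have hGu : ∀ i, 0 < Real.Gamma (u i + 1) := fun i =>
    Real.Gamma_pos_of_pos (by linarith [hu0 i])
  have hGv : 0 < Real.Gamma (v + 1) := Real.Gamma_pos_of_pos (by linarith)
  set D : ℝ := Real.Gamma (v + 1) * ∏ i, Real.Gamma (u i + 1) with hD
  have hD0 : 0 < D := mul_pos hGv (Finset.prod_pos (fun i _ => hGu i))
  have hmem : ∀ x, x ∈ Sd d → (∀ i, 0 ≤ x i) ∧ 0 ≤ 1 - ∑ i, x i := by
    intro x hx
    refine ⟨fun i => (hx.1 i).1, ?_⟩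
    have := hx.2
    rw [Finset.sum_congr rfl (fun i _ => abs_of_nonneg (hx.1 i).1)] at this
    linarith
  have hk : ∀ x, x ∈ Sd d → (kappa d s b x) ^ q =
      (Cst d s b) ^ q * ((1 - ∑ i, x i) ^ v * ∏ i, (x i) ^ (u i)) := by
    intro x hx
    obtain ⟨h1, h2⟩ := hmem x hx
    have : kappa d s b x = Cst d s b * ((1 - ∑ i, x i) ^ ((1 - ∑ i, s i) / b) *
        ∏ i, (x i) ^ (s i / b)) := by
      unfold kappa dirK Cst
      simp only [add_sub_cancel_right]
      ring
    have hp : ∀ i ∈ Finset.univ, 0 ≤ (x i) ^ (s i / b) := fun i _ => Real.rpow_nonneg (h1 i) _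
    rw [this, Real.mul_rpow hC.le (mul_nonneg (Real.rpow_nonneg h2 _) (Finset.prod_nonneg hp)),
      Real.mul_rpow (Real.rpow_nonneg h2 _) (Finset.prod_nonneg hp), ← Real.rpow_mul h2,
      ← Real.finsetProd_rpow _ _ hp]
    have e1 : (1 - ∑ i, s i) / b * q = v := by rw [hv]; field_simp
    have e2 : ∏ i, ((x i) ^ (s i / b)) ^ q = ∏ i, (x i) ^ (u i) := by
      refine Finset.prod_congr rfl (fun i _ => ?_)
      rw [← Real.rpow_mul (h1 i)]
      congr 1
      rw [hu]; field_simp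
    rw [e1, e2]
  have hpt : ∀ x, (Sd d).indicator (fun x => ENNReal.ofReal ((kappa d s b x) ^ q)) x =
      ENNReal.ofReal ((Cst d s b) ^ q * D) *
        (gk (v + 1) (1 - ∑ i, x i) * ∏ i, gk (u i + 1) (x i)) := by
    intro x
    by_cases hx : x ∈ Sd d
    · obtain ⟨h1, h2⟩ := hmem x hx
      rw [Set.indicator_of_mem hx, hk x hx, gk_of_nonneg _ _ hv0 h2,
        Finset.prod_congr rfl (fun i _ => gk_of_nonneg _ _ (hu0 i) (h1 i)),
        ← ENNReal.ofReal_prod_of_nonneg (fun i _ => div_nonneg (Real.rpow_nonneg (h1 i) _)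
          (hGu i).le), ← ENNReal.ofReal_mul (div_nonneg (Real.rpow_nonneg h2 _) hGv.le),
        ← ENNReal.ofReal_mul (by positivity), Finset.prod_div_distrib]
      congr 1
      have : ∏ i, Real.Gamma (u i + 1) ≠ 0 := Finset.prod_ne_zero_iff.2 (fun i _ => (hGu i).ne')
      rw [hD]
      field_simp
    · rw [Set.indicator_of_notMem hx]
      by_cases h1 : ∀ i, 0 ≤ x i
      · have h2 : 1 - ∑ i, x i < 0 := by
          by_contra h
          apply hx
          have hle : ∑ i, x i ≤ 1 := by linarith
          refine ⟨fun i => ⟨h1 i, ?_⟩, ?_⟩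
          · exact (Finset.single_le_sum (f := x) (fun i _ => h1 i) (Finset.mem_univ i)).trans hle
          · rwa [Finset.sum_congr rfl (fun i _ => abs_of_nonneg (h1 i))]
        rw [gk_of_neg _ _ h2]; simp
      · push Not at h1
        obtain ⟨i, hi⟩ := h1
        rw [Finset.prod_eq_zero (Finset.mem_univ i) (gk_of_neg _ _ hi)]; simp
  have hmeas : Measurable (fun x => kappa d s b x ^ q) := by
    unfold kappa dirK
    fun_prop
  rw [integral_eq_lintegral_of_nonneg_ae, ← lintegral_indicator (Sd_meas d)]
  · rw [lintegral_congr hpt, lintegral_const_mul', gk_dirichlet d _ _ _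
      (fun i => by linarith [hu0 i]) (by linarith)]
    · unfold gk
      rw [if_pos one_pos, Real.one_rpow, ← ENNReal.ofReal_mul (by positivity), ENNReal.toReal_ofReal]
      · unfold Cst
        rw [← hv, hD]
        simp only [hu]
        rw [div_div_eq_mul_div]
        ring
      · have : 0 < ∑ i, (u i + 1) + (v + 1) := by
          have : 0 ≤ ∑ i, (u i + 1) := Finset.sum_nonneg (fun i _ => by linarith [hu0 i])
          linarith
        have := Real.Gamma_pos_of_pos this
        positivity
    · exact ENNReal.ofReal_ne_top
  · filter_upwards [ae_restrict_mem (Sd_meas d)] with x hx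
    obtain ⟨h1, h2⟩ := hmem x hx
    rw [hk x hx]
    exact mul_nonneg (by positivity) (mul_nonneg (Real.rpow_nonneg h2 _)
      (Finset.prod_nonneg (fun i _ => Real.rpow_nonneg (h1 i) _)))
  · exact hmeas.aestronglyMeasurable

/-- Lemma: asymptotics of the squared L^q norm of the Dirichlet kernel. -/
theorem dirichlet_kernel_Lq_norm (d : ℕ) (hd : 1 ≤ d) (q p : ℝ) (hq : 1 < q)
    (hpq : 1 / p + 1 / q = 1) (s : Fin d → ℝ) (hs : s ∈ SdInt d) :
    (fun b : ℝ =>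
        (∫ x in Sd d, (kappa d s b x) ^ q) ^ (2 / q) /
          ((b ^ (-(d : ℝ) / p) * (psiFun d s) ^ (2 / p)) /
            (2 ^ (-(d : ℝ) / p) * q ^ ((d : ℝ) / q))) - 1)
      =O[𝓝[>] (0 : ℝ)] (fun b => b) := by
  have hsp : ∀ i, 0 < s i := fun i => (hs.1 i).1
  have hs0 : 0 < 1 - ∑ i, s i := by
    have := hs.2
    rw [Finset.sum_congr rfl (fun i _ => abs_of_pos (hsp i))] at this
    linarith
  have hq0 : 0 < q := by linarith
  have hb1 := Cst_bigO d s hsp hs0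
  have ht : Tendsto (fun b : ℝ => b / q) (𝓝[>] 0) (𝓝[>] 0) := by
    refine tendsto_nhdsWithin_iff.2 ⟨?_, ?_⟩
    · have : Tendsto (fun b : ℝ => b / q) (𝓝 0) (𝓝 (0 / q)) := (continuous_id.div_const q).tendsto 0
      rw [zero_div] at this
      exact this.mono_left nhdsWithin_le_nhds
    · filter_upwards [self_mem_nhdsWithin] with b hb
      exact div_pos hb hq0
  have hb2 : (fun b => log (Cst d s (b / q)) - Mst d s (b / q)) =O[𝓝[>] (0 : ℝ)] (fun b => b) := by
    refine (hb1.comp_tendsto ht).trans ?_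
    refine IsBigO.of_bound (1 / q) (Eventually.of_forall fun b => ?_)
    simp only [Function.comp, norm_div, norm_eq_abs, abs_of_pos hq0]
    apply le_of_eq; ring
  have hE := ((hb1.const_mul_left q).sub hb2).const_mul_left (2 / q)
  set E : ℝ → ℝ := fun b => 2 / q * (q * (log (Cst d s b) - Mst d s b) -
    (log (Cst d s (b / q)) - Mst d s (b / q))) with hEdef
  have hE0 : Tendsto E (𝓝[>] 0) (𝓝 0) :=
    hE.trans_tendsto (tendsto_id.mono_left nhdsWithin_le_nhds)
  have hexp : (fun b => exp (E b) - 1) =O[𝓝[>] (0 : ℝ)] (fun b => b) := by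
    refine IsBigO.trans (IsBigO.of_bound 2 ?_) hE
    have : ∀ᶠ b in 𝓝[>] (0 : ℝ), |E b| ≤ 1 := by
      have := hE0.abs
      rw [abs_zero] at this
      exact this.eventually_le_const one_pos
    filter_upwards [this] with b hb
    exact Real.abs_exp_sub_one_le hb
  refine hexp.congr' ?_ EventuallyEq.rfl
  filter_upwards [self_mem_nhdsWithin] with b hb
  have hb : 0 < b := hb
  have hbq : 0 < b / q := by positivity
  rw [kappa_integral d s hsp hs0 q b hq0 hb]
  have hC := Cst_pos d s b hsp hs0 hb
  have hC' := Cst_pos d s (b / q) hsp hs0 hbq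
  have hpr : 0 < ∏ i, (s i) ^ ((1 : ℝ) / 2) :=
    Finset.prod_pos (fun i _ => Real.rpow_pos_of_pos (hsp i) _)
  have hpsi : 0 < psiFun d s := by
    unfold psiFun
    positivity
  have hlpsi : log (psiFun d s) = -(d : ℝ) / 2 * (log 2 + log (2 * π))
      - 1 / 2 * (log (1 - ∑ i, s i) + ∑ i, log (s i)) := by
    unfold psiFun
    rw [log_div (by positivity) (by positivity), log_mul (by positivity) hpr.ne', log_rpow hs0,
      log_rpow (by positivity), log_prod (fun i _ => (Real.rpow_pos_of_pos (hsp i) _).ne'),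
      Finset.sum_congr rfl (fun i _ => log_rpow (hsp i) _), ← Finset.mul_sum,
      show (4 : ℝ) * π = 2 * (2 * π) by ring, log_mul two_ne_zero (by positivity)]
    ring
  congr 1
  symm
  rw [← Real.exp_log (show 0 < (Cst d s b ^ q / Cst d s (b / q)) ^ (2 / q) /
    (b ^ (-(d : ℝ) / p) * psiFun d s ^ (2 / p) / (2 ^ (-(d : ℝ) / p) * q ^ ((d : ℝ) / q))) by
      positivity)]
  congr 1
  rw [log_div (by positivity) (by positivity), log_rpow (by positivity),
    log_div (by positivity) hC'.ne', log_rpow hC, log_div (by positivity) (by positivity),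
    log_mul (by positivity) (by positivity), log_mul (by positivity) (by positivity),
    log_rpow hb, log_rpow hpsi, log_rpow two_pos, log_rpow hq0, hlpsi, hEdef]
  have hp : ∀ x : ℝ, x / p = x * (1 - 1 / q) := by
    intro x
    rw [show 1 - 1 / q = 1 / p by linarith]; ring
  simp only [hp, Mst, log_div hb.ne' hq0.ne']
  field_simp
  ring
end

section
/- Let d ∈ ℕ and s ∈ Int(S_d). Then, as b → 0, max_{x ∈ S_d} κ_{s,b}(x) ≪ b^{−d/2} ψ(s), i.e., there is a constant C (depending only on d) such that sup_{x ∈ S_d} κ_{s,b}(x) ≤ C b^{−d/2} ψ(s) for all sufficiently small b > 0. -/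
open MeasureTheory Filter Asymptotics Real Topology

noncomputable section

def gStir (z : ℝ) : ℝ := Real.log (Real.Gamma (z + 1)) - (z + 1 / 2) * Real.log z + z

lemma gStir_step {z : ℝ} (hz : 0 < z) :
    gStir (z + 1) - gStir z = 1 - (z + 1 / 2) * Real.log (1 + 1 / z) := by
  unfold gStir
  have h1 : Real.Gamma (z + 1 + 1) = (z + 1) * Real.Gamma (z + 1) :=
    Real.Gamma_add_one (by positivity)
  have h2 : Real.Gamma (z + 1) ≠ 0 := (Real.Gamma_pos_of_pos (by positivity)).ne'
  have h3 : (1 + 1 / z) = (z + 1) / z := by field_simp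
  rw [h1, Real.log_mul (by positivity) h2, h3, Real.log_div (by positivity) hz.ne']
  ring

lemma gStir_step_le {z : ℝ} (hz : 0 < z) : gStir (z + 1) ≤ gStir z := by
  have h := gStir_step hz
  have h1 := Real.le_log_one_add_of_nonneg (x := 1 / z) (by positivity)
  have h2 : 2 * (1 / z) / (1 / z + 2) = 1 / (z + 1 / 2) := by field_simp; ring
  rw [h2] at h1
  have h3 : (z + 1 / 2) * (1 / (z + 1 / 2)) = 1 := by field_simp
  nlinarith [mul_le_mul_of_nonneg_left h1 (show 0 ≤ z + 1 / 2 by positivity)]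

lemma log_le_half {y : ℝ} (hy : 1 ≤ y) : Real.log y ≤ (y - y⁻¹) / 2 := by
  have h := Real.self_le_sinh_iff.2 (Real.log_nonneg hy)
  rwa [Real.sinh_eq, Real.exp_neg, Real.exp_log (by linarith)] at h

lemma gStir_step_ge {z : ℝ} (hz : 0 < z) :
    gStir z - 1 / (4 * z) ≤ gStir (z + 1) - 1 / (4 * (z + 1)) := by
  have h := gStir_step hz
  have h1 := log_le_half (y := 1 + 1 / z) (by simp; positivity)
  have h2 : (z + 1 / 2) * ((1 + 1 / z - (1 + 1 / z)⁻¹) / 2)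
      = 1 + 1 / (4 * z) - 1 / (4 * (z + 1)) := by
    field_simp; ring
  nlinarith [mul_le_mul_of_nonneg_left h1 (show 0 ≤ z + 1 / 2 by positivity)]

lemma gStir_bdd : ∃ M : ℝ, ∀ z : ℝ, 1 ≤ z → |gStir z| ≤ M := by
  have hc : ContinuousOn gStir (Set.Icc 1 2) := by
    intro z hz
    have hz0 : 0 < z := by linarith [hz.1]
    apply ContinuousAt.continuousWithinAt
    unfold gStir
    have hG : ContinuousAt (fun z : ℝ => Real.Gamma (z + 1)) z := by
      have : ContinuousAt Real.Gamma (z + 1) := by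
        apply DifferentiableAt.continuousAt (𝕜 := ℝ)
        apply Real.differentiableAt_Gamma
        intro m
        have : (0 : ℝ) ≤ m := Nat.cast_nonneg m
        linarith
      exact ContinuousAt.comp (f := fun z : ℝ => z + 1) this (by fun_prop)
    have hG' := hG.log (Real.Gamma_pos_of_pos (by linarith : 0 < z + 1)).ne'
    have hl : ContinuousAt Real.log z := Real.continuousAt_log hz0.ne'
    exact (hG'.sub ((continuousAt_id.add continuousAt_const).mul hl)).add continuousAt_id
  obtain ⟨M, hM⟩ := isCompact_Icc.exists_bound_of_continuousOn hc
  have key : ∀ n : ℕ, ∀ z : ℝ, 1 ≤ z → z ≤ n + 2 →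
      gStir z ≤ M ∧ -M - 1 ≤ gStir z - 1 / (4 * z) := by
    intro n
    induction n with
    | zero =>
      intro z h1 h2
      have := abs_le.1 (hM z ⟨h1, by simpa using h2⟩)
      have h3 : 1 / (4 * z) ≤ 1 := by rw [div_le_one (by linarith)]; linarith
      exact ⟨this.2, by linarith⟩
    | succ n ih =>
      intro z h1 h2
      push_cast at h2
      by_cases h : z ≤ n + 2
      · exact ih z h1 h
      · push Not at h
        have hn : (0 : ℝ) ≤ n := Nat.cast_nonneg n
        obtain ⟨i1, i2⟩ := ih (z - 1) (by linarith) (by linarith)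
        have a := gStir_step_le (z := z - 1) (by linarith)
        have c := gStir_step_ge (z := z - 1) (by linarith)
        simp only [sub_add_cancel] at a c
        exact ⟨by linarith, by linarith⟩
  refine ⟨M + 1, fun z hz => ?_⟩
  obtain ⟨n, hn⟩ := exists_nat_ge z
  obtain ⟨h1, h2⟩ := key n z hz (by linarith)
  have : 0 < 1 / (4 * z) := by positivity
  rw [abs_le]
  exact ⟨by linarith, by linarith⟩

lemma gamma_shift {N : ℝ} {d : ℕ} (hN : 0 < N) (k : ℕ) (hk : k ≤ d) :
    Real.Gamma (N + 1 + k) ≤ (N + d) ^ k * Real.Gamma (N + 1) := by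
  induction k with
  | zero => simp
  | succ k ih =>
    have h := ih (by omega)
    have hk' : (k : ℝ) + 1 ≤ d := by exact_mod_cast hk
    have h0 : 0 < N + 1 + k := by positivity
    have e : N + 1 + ((k + 1 : ℕ) : ℝ) = (N + 1 + k) + 1 := by push_cast; ring
    rw [e, Real.Gamma_add_one h0.ne', pow_succ]
    calc (N + 1 + k) * Real.Gamma (N + 1 + k)
        ≤ (N + d) * ((N + d) ^ k * Real.Gamma (N + 1)) := by
          apply mul_le_mul (by linarith) h (Real.Gamma_pos_of_pos h0).le (by positivity)
      _ = _ := by ring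

lemma gibbs {n : ℕ} (S X : Fin n → ℝ) (hS : ∀ i, 0 < S i) (hX : ∀ i, 0 ≤ X i)
    (sS : ∑ i, S i = 1) (sX : ∑ i, X i ≤ 1) {N : ℝ} (hN : 0 ≤ N) :
    ∏ i, X i ^ (S i * N) ≤ ∏ i, S i ^ (S i * N) := by
  have h := Real.geom_mean_le_arith_mean_weighted Finset.univ S (fun i => X i / S i)
    (fun i _ => (hS i).le) sS (fun i _ => div_nonneg (hX i) (hS i).le)
  have h1 : ∑ i, S i * (X i / S i) = ∑ i, X i :=
    Finset.sum_congr rfl fun i _ => by have := (hS i).ne'; field_simp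
  have h2 : ∏ i, (X i / S i) ^ S i = (∏ i, X i ^ S i) / ∏ i, S i ^ S i := by
    rw [← Finset.prod_div_distrib]
    exact Finset.prod_congr rfl fun i _ => Real.div_rpow (hX i) (hS i).le _
  have hp : 0 < ∏ i, S i ^ S i := Finset.prod_pos fun i _ => Real.rpow_pos_of_pos (hS i) _
  rw [h1, h2] at h
  have h3 : ∏ i, X i ^ S i ≤ ∏ i, S i ^ S i := by
    have := (div_le_one hp).1 (h.trans sX)
    exact this
  have e : ∀ Y : Fin n → ℝ, (∀ i, 0 ≤ Y i) → ∏ i, Y i ^ (S i * N) = (∏ i, Y i ^ S i) ^ N := by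
    intro Y hY
    rw [← Real.finsetProd_rpow _ _ (fun i _ => Real.rpow_nonneg (hY i) _)]
    exact Finset.prod_congr rfl fun i _ => Real.rpow_mul (hY i) _ _
  rw [e X hX, e S fun i => (hS i).le]
  exact Real.rpow_le_rpow (Finset.prod_nonneg fun i _ => Real.rpow_nonneg (hX i) _) h3 hN

lemma term_bound {M : ℝ} (hM : ∀ z : ℝ, 1 ≤ z → |gStir z| ≤ M) {N S : ℝ} (hN : 0 < N)
    (hS : 0 < S) (h1 : 1 ≤ S * N) :
    S ^ (S * N) / Real.Gamma (S * N + 1) ≤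
      Real.exp (M + S * N - (S * N + 1 / 2) * Real.log N) * (S ^ ((1 : ℝ) / 2))⁻¹ := by
  have hG : 0 < Real.Gamma (S * N + 1) := Real.Gamma_pos_of_pos (by positivity)
  have hm := (abs_le.1 (hM _ h1)).1
  unfold gStir at hm
  rw [Real.log_mul hS.ne' hN.ne'] at hm
  rw [Real.rpow_def_of_pos hS, Real.rpow_def_of_pos hS, ← Real.exp_neg, ← Real.exp_add,
    div_eq_mul_inv]
  nth_rw 1 [← Real.exp_log hG]
  rw [← Real.exp_neg, ← Real.exp_add]
  apply Real.exp_le_exp.2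
  linarith

lemma core {M : ℝ} (hM : ∀ z : ℝ, 1 ≤ z → |gStir z| ≤ M) {d : ℕ} {N : ℝ} (hN1 : 1 ≤ N)
    (hNd : d ≤ N) (S : Fin (d + 1) → ℝ) (hS : ∀ i, 0 < S i) (sS : ∑ i, S i = 1)
    (h1 : ∀ i, 1 ≤ S i * N) :
    Real.Gamma (N + 1 + d) * ∏ i, (S i ^ (S i * N) / Real.Gamma (S i * N + 1)) ≤
      Real.exp (M * (d + 2)) * 2 ^ d * Real.exp (d / 2 * Real.log N) *
        (∏ i, S i ^ ((1 : ℝ) / 2))⁻¹ := by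
  have hN : 0 < N := by linarith
  have hG : 0 < Real.Gamma (N + 1) := Real.Gamma_pos_of_pos (by positivity)
  have a : Real.Gamma (N + 1 + d) ≤
      2 ^ d * Real.exp (d * Real.log N + (M + (N + 1 / 2) * Real.log N - N)) := by
    refine (gamma_shift hN d le_rfl).trans ?_
    have a1 : (N + d) ^ d ≤ 2 ^ d * Real.exp (d * Real.log N) := by
      rw [mul_comm (d : ℝ), ← Real.rpow_def_of_pos hN, Real.rpow_natCast, ← mul_pow]
      exact pow_le_pow_left₀ (by positivity) (by linarith) _
    have a2 : Real.Gamma (N + 1) ≤ Real.exp (M + (N + 1 / 2) * Real.log N - N) := by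
      rw [← Real.log_le_iff_le_exp hG]
      have := (abs_le.1 (hM N hN1)).2
      unfold gStir at this
      linarith
    rw [Real.exp_add, ← mul_assoc]
    exact mul_le_mul a1 a2 hG.le (by positivity)
  have c : ∏ i, (S i ^ (S i * N) / Real.Gamma (S i * N + 1)) ≤
      Real.exp (M * (d + 1) + N - (N + (d + 1) / 2) * Real.log N) *
        (∏ i, S i ^ ((1 : ℝ) / 2))⁻¹ := by
    refine (Finset.prod_le_prod (fun i _ => ?_)
      (fun i _ => term_bound hM hN (hS i) (h1 i))).trans ?_
    · exact div_nonneg (Real.rpow_nonneg (hS i).le _)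
        (Real.Gamma_pos_of_pos (by linarith [h1 i])).le
    · rw [Finset.prod_mul_distrib, Finset.prod_inv_distrib, ← Real.exp_sum]
      apply le_of_eq
      congr 2
      rw [Finset.sum_sub_distrib, Finset.sum_add_distrib, ← Finset.sum_mul, ← Finset.sum_mul,
        Finset.sum_add_distrib, ← Finset.sum_mul, sS]
      simp
      ring
  refine (mul_le_mul a c ?_ (by positivity)).trans ?_
  · exact Finset.prod_nonneg fun i _ => div_nonneg (Real.rpow_nonneg (hS i).le _)
        (Real.Gamma_pos_of_pos (by linarith [h1 i])).le
  · apply le_of_eq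
    rw [mul_assoc, ← mul_assoc (Real.exp _) (Real.exp _), ← Real.exp_add, ← mul_assoc,
      mul_comm (Real.exp (M * (d + 2))), mul_assoc (2 ^ d) (Real.exp _) (Real.exp _),
      ← Real.exp_add]
    congr 3
    ring

end

/-- Lemma: uniform local bound on the Dirichlet kernel. -/
theorem dirichlet_kernel_sup_bound (d : ℕ) (hd : 1 ≤ d) :
    ∃ C : ℝ, 0 < C ∧ ∀ s ∈ SdInt d, ∃ b₀ : ℝ, 0 < b₀ ∧
      ∀ b : ℝ, 0 < b → b < b₀ → ∀ x ∈ Sd d,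
        kappa d s b x ≤ C * b ^ (-(d : ℝ) / 2) * psiFun d s := by
  obtain ⟨M, hM⟩ := gStir_bdd
  have hpi : 0 < (4 * π) ^ (-(d : ℝ) / 2) := Real.rpow_pos_of_pos (by positivity) _
  refine ⟨Real.exp (M * (d + 2)) * 2 ^ d * ((4 * π) ^ (-(d : ℝ) / 2))⁻¹, by positivity, ?_⟩
  intro s hs
  obtain ⟨hs1, hs2⟩ := hs
  have hs2' : ∑ i, s i < 1 := by
    refine lt_of_le_of_lt (Finset.sum_le_sum fun i _ => le_abs_self (s i)) hs2
  set S : Fin (d + 1) → ℝ := Fin.cons (1 - ∑ i, s i) s with hSdef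
  have hS : ∀ i, 0 < S i := by
    intro i
    refine Fin.cases ?_ (fun j => ?_) i
    · simp [S]; exact hs2'
    · simpa [S] using (hs1 j).1
  have sS : ∑ i, S i = 1 := by simp [S, Fin.sum_univ_succ]
  have hev : ∀ᶠ b : ℝ in 𝓝[>] 0, ∀ i, b < S i := by
    rw [eventually_all]
    exact fun i => nhdsWithin_le_nhds (eventually_lt_nhds (hS i))
  have hev2 : ∀ᶠ b : ℝ in 𝓝[>] 0, b < 1 / (d : ℝ) :=
    nhdsWithin_le_nhds (eventually_lt_nhds (by positivity))
  obtain ⟨b₀, hb₀, hb⟩ := mem_nhdsGT_iff_exists_Ioo_subset.1 (hev.and hev2)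
  refine ⟨b₀, hb₀, fun b hb0 hbb x hx => ?_⟩
  obtain ⟨hbS, hbd⟩ := hb ⟨hb0, hbb⟩
  obtain ⟨hx1, hx2⟩ := hx
  have hx2' : ∑ i, x i ≤ 1 :=
    (Finset.sum_le_sum fun i _ => le_abs_self (x i)).trans hx2
  have hd' : (1 : ℝ) ≤ d := by exact_mod_cast hd
  have hNd : (d : ℝ) ≤ b⁻¹ := by
    rw [lt_div_iff₀ (by linarith)] at hbd
    rw [← one_div, le_div_iff₀ hb0]
    linarith
  set X : Fin (d + 1) → ℝ := Fin.cons (1 - ∑ i, x i) x with hXdef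
  have hX : ∀ i, 0 ≤ X i := by
    intro i
    refine Fin.cases ?_ (fun j => ?_) i
    · simp [X]; exact hx2'
    · simpa [X] using (hx1 j).1
  have sX : ∑ i, X i ≤ 1 := by simp [X, Fin.sum_univ_succ]
  have h1 : ∀ i, 1 ≤ S i * b⁻¹ := by
    intro i
    rw [← div_eq_mul_inv, le_div_iff₀ hb0]
    linarith [hbS i]
  have hg := gibbs S X hS hX sS sX (N := b⁻¹) (by positivity)
  have hc := core hM (hd'.trans hNd) hNd S hS sS h1
  have hGp : ∀ i, 0 < Real.Gamma (S i * b⁻¹ + 1) := fun i =>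
    Real.Gamma_pos_of_pos (by linarith [h1 i])
  have e1 : kappa d s b x = Real.Gamma (b⁻¹ + 1 + d) / (∏ i, Real.Gamma (S i * b⁻¹ + 1)) *
      ∏ i, X i ^ (S i * b⁻¹) := by
    have e0 : ∑ i, (s i / b + 1) + ((1 - ∑ i, s i) / b + 1) = b⁻¹ + 1 + d := by
      rw [Finset.sum_add_distrib, ← Finset.sum_div]
      simp
      field_simp
      ring
    unfold kappa dirK
    rw [e0]
    simp only [Fin.prod_univ_succ, S, X, Fin.cons_zero, Fin.cons_succ, add_sub_cancel_right,
      div_eq_mul_inv]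
    ring
  have e2 : b ^ (-(d : ℝ) / 2) = Real.exp (d / 2 * Real.log b⁻¹) := by
    rw [Real.rpow_def_of_pos hb0, Real.log_inv]
    congr 1
    ring
  have e3 : psiFun d s = (4 * π) ^ (-(d : ℝ) / 2) * (∏ i, S i ^ ((1 : ℝ) / 2))⁻¹ := by
    unfold psiFun
    simp only [Fin.prod_univ_succ, S, Fin.cons_zero, Fin.cons_succ, div_eq_mul_inv]
  rw [e1, e2, e3]
  have hGN : 0 < Real.Gamma (b⁻¹ + 1 + d) := Real.Gamma_pos_of_pos (by positivity)
  have hGP : 0 < ∏ i, Real.Gamma (S i * b⁻¹ + 1) := Finset.prod_pos fun i _ => hGp i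
  refine (mul_le_mul_of_nonneg_left hg (div_nonneg hGN.le hGP.le)).trans ?_
  rw [Finset.prod_div_distrib] at hc
  refine (le_of_eq ?_).trans (hc.trans (le_of_eq ?_))
  · ring
  · field_simp
end

section
/- Let d ∈ ℕ, q ∈ (1,∞), b > 0, and s ∈ Int(S_d). Then the q-th power integral of the Dirichlet kernel admits the exact closed form ∫_{S_d} κ_{s,b}^q(x) dx = [Γ(q(1−‖s‖₁)/b + 1) ∏_{i=1}^d Γ(q s_i/b + 1)] / [Γ^q((1−‖s‖₁)/b + 1) ∏_{i=1}^d Γ^q(s_i/b + 1)] × Γ^q(1/b + d + 1) / Γ(q/b + d + 1). -/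
open MeasureTheory Filter Asymptotics Real Topology

lemma aux_beta (a c t : ℝ) (ha : 0 ≤ a) (hc : 0 ≤ c) (ht : 0 ≤ t) :
    ∫⁻ y in Set.Icc 0 t, ENNReal.ofReal (y ^ a * (t - y) ^ c) =
      ENNReal.ofReal (t ^ (a + c + 1) * (Gamma (a + 1) * Gamma (c + 1) / Gamma (a + c + 2))) := by
  have hcont : Continuous fun y : ℝ => y ^ a * (t - y) ^ c :=
    (continuous_id.rpow_const (fun _ => Or.inr ha)).mul
      ((continuous_const.sub continuous_id).rpow_const (fun _ => Or.inr hc))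
  rw [← ofReal_integral_eq_lintegral_ofReal
    (hcont.integrableOn_Icc)
    (by
      filter_upwards [ae_restrict_mem measurableSet_Icc] with y hy
      exact mul_nonneg (rpow_nonneg hy.1 _) (rpow_nonneg (by linarith [hy.2]) _))]
  congr 1
  rw [integral_Icc_eq_integral_Ioc, ← intervalIntegral.integral_of_le ht]
  rcases ht.eq_or_lt with rfl | ht
  · rw [intervalIntegral.integral_same, zero_rpow (by linarith), zero_mul]
  have h1 := Complex.betaIntegral_scaled ((a + 1 : ℝ) : ℂ) ((c + 1 : ℝ) : ℂ) ht
  have h2 := Complex.Gamma_mul_Gamma_eq_betaIntegral (s := ((a + 1 : ℝ) : ℂ))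
    (t := ((c + 1 : ℝ) : ℂ)) (by simp; linarith) (by simp; linarith)
  have h3 : (∫ x in (0:ℝ)..t, (x : ℂ) ^ (((a + 1 : ℝ) : ℂ) - 1) * ((t : ℂ) - x) ^ (((c + 1 : ℝ) : ℂ) - 1))
      = ((∫ x in (0:ℝ)..t, x ^ a * (t - x) ^ c : ℝ) : ℂ) := by
    rw [← intervalIntegral.integral_ofReal]
    apply intervalIntegral.integral_congr
    intro x hx
    rw [Set.uIcc_of_le ht.le] at hx
    simp only
    push_cast
    rw [Complex.ofReal_cpow hx.1, Complex.ofReal_cpow (by linarith [hx.2])]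
    push_cast
    simp
  have hG : Gamma (a + c + 2) ≠ 0 := (Gamma_pos_of_pos (by linarith)).ne'
  have e1 : (((a + 1 : ℝ) : ℂ) + ((c + 1 : ℝ) : ℂ)) = ((a + c + 2 : ℝ) : ℂ) := by push_cast; ring
  have e2 : (((a + 1 : ℝ) : ℂ) + ((c + 1 : ℝ) : ℂ) - 1) = ((a + c + 1 : ℝ) : ℂ) := by push_cast; ring
  rw [h3, e2, ← Complex.ofReal_cpow ht.le] at h1
  rw [e1, Complex.Gamma_ofReal, Complex.Gamma_ofReal, Complex.Gamma_ofReal] at h2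
  have h4 : Complex.betaIntegral ((a + 1 : ℝ) : ℂ) ((c + 1 : ℝ) : ℂ) =
      ((Gamma (a + 1) * Gamma (c + 1) / Gamma (a + c + 2) : ℝ) : ℂ) := by
    have hG' : ((Gamma (a + c + 2) : ℝ) : ℂ) ≠ 0 := by exact_mod_cast hG
    rw [Complex.ofReal_div, Complex.ofReal_mul, h2]
    field_simp
  rw [h4] at h1
  exact_mod_cast h1

/-- unscaled Dirichlet weight on the simplex of size `t`, extended by zero -/
noncomputable def auxF (d : ℕ) (c : ℝ) (a : Fin d → ℝ) (t : ℝ) (x : Fin d → ℝ) : ENNReal :=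
  {x : Fin d → ℝ | (∀ i, 0 ≤ x i) ∧ ∑ i, x i ≤ t}.indicator
    (fun x => ENNReal.ofReal ((t - ∑ i, x i) ^ c * ∏ i, x i ^ a i)) x

lemma aux_meas_set (d : ℕ) (t : ℝ) :
    MeasurableSet {x : Fin d → ℝ | (∀ i, 0 ≤ x i) ∧ ∑ i, x i ≤ t} := by
  apply IsClosed.measurableSet
  have e : {x : Fin d → ℝ | (∀ i, 0 ≤ x i) ∧ ∑ i, x i ≤ t} =
      (⋂ i, {x : Fin d → ℝ | 0 ≤ x i}) ∩ {x : Fin d → ℝ | ∑ i, x i ≤ t} := by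
    ext x; simp
  rw [e]
  exact (isClosed_iInter fun i => isClosed_le continuous_const (continuous_apply i)).inter
    (isClosed_le (by fun_prop) continuous_const)

lemma auxF_meas (d : ℕ) (c : ℝ) (a : Fin d → ℝ) (t : ℝ) : Measurable (auxF d c a t) := by
  unfold auxF
  apply Measurable.indicator _ (aux_meas_set d t)
  fun_prop

lemma auxF_cons (d : ℕ) (c : ℝ) (a : Fin (d + 1) → ℝ) (t y : ℝ) (x : Fin d → ℝ) :
    auxF (d + 1) c a t (Fin.cons y x) =
      (Set.Icc 0 t).indicator (fun y => ENNReal.ofReal (y ^ a 0)) y *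
        auxF d c (fun i => a i.succ) (t - y) x := by
  unfold auxF
  by_cases hy : y ∈ Set.Icc 0 t
  · by_cases hx : x ∈ {x : Fin d → ℝ | (∀ i, 0 ≤ x i) ∧ ∑ i, x i ≤ t - y}
    · rw [Set.indicator_of_mem hx, Set.indicator_of_mem hy, Set.indicator_of_mem,
        ← ENNReal.ofReal_mul (rpow_nonneg hy.1 _)]
      · simp only [Fin.sum_univ_succ, Fin.prod_univ_succ, Fin.cons_zero, Fin.cons_succ]
        congr 1
        rw [sub_sub]; ring
      · refine ⟨fun i => ?_, ?_⟩
        · refine Fin.cases ?_ (fun j => ?_) i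
          · simpa using hy.1
          · simpa using hx.1 j
        · rw [Fin.sum_univ_succ]
          simp only [Fin.cons_zero, Fin.cons_succ]
          linarith [hx.2]
    · rw [Set.indicator_of_notMem hx, mul_zero, Set.indicator_of_notMem]
      rintro ⟨h1, h2⟩
      apply hx
      refine ⟨fun i => by simpa using h1 i.succ, ?_⟩
      rw [Fin.sum_univ_succ] at h2
      simp only [Fin.cons_zero, Fin.cons_succ] at h2
      linarith
  · rw [Set.indicator_of_notMem hy, zero_mul, Set.indicator_of_notMem]
    rintro ⟨h1, h2⟩
    apply hy
    have h0 : 0 ≤ y := by simpa using h1 0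
    refine ⟨h0, ?_⟩
    rw [Fin.sum_univ_succ] at h2
    simp only [Fin.cons_zero, Fin.cons_succ] at h2
    have : 0 ≤ ∑ i, x i := Finset.sum_nonneg fun i _ => by simpa using h1 i.succ
    linarith

lemma aux_dir (d : ℕ) (c : ℝ) (hc : 0 ≤ c) (a : Fin d → ℝ) (ha : ∀ i, 0 ≤ a i) (t : ℝ)
    (ht : 0 ≤ t) :
    ∫⁻ x, auxF d c a t x = ENNReal.ofReal (t ^ (c + ∑ i, a i + d) *
      (Gamma (c + 1) * (∏ i, Gamma (a i + 1)) / Gamma (c + ∑ i, a i + d + 1))) := by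
  induction d generalizing t with
  | zero =>
    have hG : Gamma (c + 1) ≠ 0 := (Gamma_pos_of_pos (by linarith)).ne'
    have hv : (volume : Measure (Fin 0 → ℝ)) Set.univ = 1 := by
      rw [volume_pi, Measure.pi_of_empty]; simp
    simp [auxF, lintegral_unique, ht, hG, hv]
  | succ d ih =>
    have hmp := (volume_preserving_piFinSuccAbove (fun _ : Fin (d + 1) => ℝ) 0).symm
    rw [← hmp.lintegral_comp_emb (MeasurableEquiv.measurableEmbedding _),
      Measure.volume_eq_prod, lintegral_prod]
    swap
    · exact ((auxF_meas _ _ _ _).comp (MeasurableEquiv.measurable _)).aemeasurable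
    have hS : 0 ≤ ∑ i : Fin d, a i.succ := Finset.sum_nonneg fun i _ => ha _
    set C := c + ∑ i : Fin d, a i.succ + d with hC
    have hC0 : 0 ≤ C := by positivity
    set K := Gamma (c + 1) * (∏ i : Fin d, Gamma (a i.succ + 1)) / Gamma (C + 1) with hK
    have hK0 : 0 ≤ K := by
      apply div_nonneg
      · exact mul_nonneg (Gamma_pos_of_pos (by linarith)).le
          (Finset.prod_nonneg fun i _ => (Gamma_pos_of_pos (by linarith [ha i.succ])).le)
      · exact (Gamma_pos_of_pos (by linarith)).le
    have key : ∀ y : ℝ, ∫⁻ x : Fin d → ℝ, auxF (d + 1) c a t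
        ((MeasurableEquiv.piFinSuccAbove (fun _ : Fin (d + 1) => ℝ) 0).symm (y, x)) =
        (Set.Icc 0 t).indicator (fun y => ENNReal.ofReal K *
          ENNReal.ofReal (y ^ a 0 * (t - y) ^ C)) y := by
      intro y
      have : ∀ x : Fin d → ℝ, (MeasurableEquiv.piFinSuccAbove (fun _ : Fin (d + 1) => ℝ) 0).symm (y, x)
          = Fin.cons y x := by
        intro x
        simp [MeasurableEquiv.piFinSuccAbove]
        rfl
      simp_rw [this, auxF_cons]
      rw [lintegral_const_mul _ (auxF_meas _ _ _ _)]
      by_cases hy : y ∈ Set.Icc 0 t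
      · rw [Set.indicator_of_mem hy, Set.indicator_of_mem hy,
          ih _ (fun i => ha _) _ (by linarith [hy.2]), ← ENNReal.ofReal_mul (rpow_nonneg hy.1 _),
          ← ENNReal.ofReal_mul hK0]
        congr 1
        rw [← hC, ← hK]; ring
      · rw [Set.indicator_of_notMem hy, Set.indicator_of_notMem hy, zero_mul]
    simp_rw [key]
    rw [lintegral_indicator measurableSet_Icc, lintegral_const_mul _ (by fun_prop),
      aux_beta _ _ _ (ha 0) hC0 ht, ← ENNReal.ofReal_mul hK0]
    congr 1
    have hG : Gamma (C + 1) ≠ 0 := (Gamma_pos_of_pos (by linarith)).ne'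
    rw [Fin.sum_univ_succ, Fin.prod_univ_succ]
    have e : c + (a 0 + ∑ i : Fin d, a i.succ) + ((d + 1 : ℕ) : ℝ) = a 0 + C + 1 := by
      rw [hC]; push_cast; ring
    rw [e, show a 0 + C + 1 + 1 = a 0 + C + 2 by ring, hK]
    field_simp

/-- Exact closed form of the q-th power integral of the Dirichlet kernel. -/
theorem dirichlet_kernel_q_power_integral (d : ℕ) (hd : 1 ≤ d) (q : ℝ) (hq : 1 < q)
    (b : ℝ) (hb : 0 < b) (s : Fin d → ℝ) (hs : s ∈ SdInt d) :
    ∫ x in Sd d, (kappa d s b x) ^ q =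
      (Real.Gamma (q * (1 - ∑ i, s i) / b + 1) * ∏ i, Real.Gamma (q * s i / b + 1)) /
          (Real.Gamma ((1 - ∑ i, s i) / b + 1) ^ q * ∏ i, Real.Gamma (s i / b + 1) ^ q) *
        (Real.Gamma (1 / b + d + 1) ^ q / Real.Gamma (q / b + d + 1)) := by
  obtain ⟨hs1, hs2⟩ := hs
  have hq0 : 0 < q := by linarith
  have hs0 : ∀ i, 0 < s i := fun i => (hs1 i).1
  simp_rw [fun i => abs_of_pos (hs0 i)] at hs2
  have hr : 0 < 1 - ∑ i, s i := by linarith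
  have hSd : Sd d = {x : Fin d → ℝ | (∀ i, 0 ≤ x i) ∧ ∑ i, x i ≤ 1} := by
    ext x
    constructor
    · rintro ⟨h1, h2⟩
      refine ⟨fun i => (h1 i).1, ?_⟩
      rwa [Finset.sum_congr rfl fun i _ => abs_of_nonneg (h1 i).1] at h2
    · rintro ⟨h1, h2⟩
      refine ⟨fun i => ⟨h1 i, ?_⟩, ?_⟩
      · exact (Finset.single_le_sum (fun j _ => h1 j) (Finset.mem_univ i)).trans h2
      · rwa [Finset.sum_congr rfl fun i _ => abs_of_nonneg (h1 i)]
  have hmeas : MeasurableSet (Sd d) := hSd ▸ aux_meas_set d 1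
  set A := Gamma ((1 - ∑ i, s i) / b + 1) with hA
  set B := ∏ i, Gamma (s i / b + 1) with hB
  set G := Gamma (1 / b + d + 1) with hG
  have hA0 : 0 < A := Gamma_pos_of_pos (by positivity)
  have hBi : ∀ i, 0 < Gamma (s i / b + 1) := fun i => by
    have := hs0 i
    exact Gamma_pos_of_pos (by positivity)
  have hB0 : 0 < B := Finset.prod_pos fun i _ => hBi i
  have hG0 : 0 < G := Gamma_pos_of_pos (by positivity)
  have hsum : ∑ i, (s i / b + 1) + ((1 - ∑ i, s i) / b + 1) = 1 / b + d + 1 := by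
    rw [Finset.sum_add_distrib, ← Finset.sum_div]
    simp
    ring
  have hpt : ∀ x ∈ Sd d, kappa d s b x ^ q = (G / (A * B)) ^ q *
      ((1 - ∑ i, x i) ^ (q * (1 - ∑ i, s i) / b) * ∏ i, x i ^ (q * s i / b)) := by
    intro x hx
    rw [hSd] at hx
    obtain ⟨hx1, hx2⟩ := hx
    have hx3 : 0 ≤ 1 - ∑ i, x i := by linarith
    unfold kappa dirK
    rw [hsum, ← hA, ← hB, ← hG]
    simp only [add_sub_cancel_right]
    have hp : ∀ i ∈ Finset.univ, 0 ≤ x i ^ (s i / b) := fun i _ => rpow_nonneg (hx1 i) _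
    rw [mul_rpow (mul_nonneg (by positivity) (rpow_nonneg hx3 _)) (Finset.prod_nonneg hp),
      mul_rpow (by positivity) (rpow_nonneg hx3 _), ← Real.finsetProd_rpow _ _ hp,
      ← rpow_mul hx3, mul_assoc]
    congr 2
    · congr 1; ring
    · refine Finset.prod_congr rfl fun i _ => ?_
      rw [← rpow_mul (hx1 i)]
      congr 1; ring
  rw [setIntegral_congr_fun hmeas hpt, integral_const_mul, integral_eq_lintegral_of_nonneg_ae]
  rotate_left
  · filter_upwards [ae_restrict_mem hmeas] with x hx
    rw [hSd] at hx
    exact mul_nonneg (rpow_nonneg (by linarith [hx.2]) _)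
      (Finset.prod_nonneg fun i _ => rpow_nonneg (hx.1 i) _)
  · apply Measurable.aestronglyMeasurable
    fun_prop
  have hdir := aux_dir d (q * (1 - ∑ i, s i) / b) (by positivity) (fun i => q * s i / b)
    (fun i => by have := hs0 i; positivity) 1 zero_le_one
  rw [← lintegral_indicator hmeas, hSd]
  unfold auxF at hdir
  rw [hdir, one_rpow, one_mul]
  have e : q * (1 - ∑ i, s i) / b + ∑ i, q * s i / b + d + 1 = q / b + d + 1 := by
    rw [← Finset.sum_div, ← Finset.mul_sum]; ring
  rw [e, ENNReal.toReal_ofReal, Real.finsetProd_rpow _ _ (fun i _ => (hBi i).le),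
    div_rpow hG0.le (by positivity), mul_rpow hA0.le hB0.le]
  · ring
  · apply div_nonneg
    · exact mul_nonneg (Gamma_pos_of_pos (by positivity)).le
        (Finset.prod_nonneg fun i _ => (Gamma_pos_of_pos (by have := hs0 i; positivity)).le)
    · exact (Gamma_pos_of_pos (by positivity)).le
end

section
/- Let d ∈ ℕ, q ∈ (1,∞), and s ∈ Int(S_d). Define R(z) = √(2π) e^{−z} z^{z+1/2} / Γ(z+1) for z > 0, and S_{b,q}(s) = [R^q((1−‖s‖₁)/b) ∏_{i=1}^d R^q(s_i/b)] / [R(q(1−‖s‖₁)/b) ∏_{i=1}^d R(q s_i/b)] × R(q/b + d) / R^q(1/b + d). Then, as b → 0, S_{b,q}(s) = 1 + O_s(b). -/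
open MeasureTheory Filter Asymptotics Real Topology

lemma aux_Rfun_pos {z : ℝ} (hz : 0 < z) : 0 < Rfun z := by
  have := Real.Gamma_pos_of_pos (show 0 < z + 1 by linarith)
  unfold Rfun
  positivity

lemma aux_log_Rfun {z : ℝ} (hz : 0 < z) :
    Real.log (Rfun z) = Real.log (2 * π) / 2 - z + (z + 1 / 2) * Real.log z
      - Real.log (Real.Gamma (z + 1)) := by
  have hG := Real.Gamma_pos_of_pos (show 0 < z + 1 by linarith)
  have h2 : 0 < √(2 * π) := by positivity
  have h3 : 0 < z ^ (z + 1 / 2) := by positivity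
  unfold Rfun
  rw [Real.log_div (by positivity) hG.ne', Real.log_mul (by positivity) h3.ne',
    Real.log_mul h2.ne' (Real.exp_pos _).ne', Real.log_exp, Real.log_rpow hz,
    Real.log_sqrt (by positivity)]
  ring

lemma aux_log_Gamma_succ {y : ℝ} (hy : 0 < y) :
    Real.log (Real.Gamma (y + 1)) = Real.log (Real.Gamma y) + Real.log y := by
  rw [Real.Gamma_add_one hy.ne', Real.log_mul hy.ne' (Real.Gamma_pos_of_pos hy).ne', add_comm]

lemma aux_step {z : ℝ} (hz : 0 < z) :
    0 ≤ Real.log (Rfun (z + 1)) - Real.log (Rfun z) ∧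
    Real.log (Rfun (z + 1)) - Real.log (Rfun z) ≤ 1 / 4 * (1 / z - 1 / (z + 1)) := by
  have hz1 : 0 < z + 1 := by linarith
  have e : Real.log (Rfun (z + 1)) - Real.log (Rfun z)
      = (z + 1 / 2) * Real.log (1 + 1 / z) - 1 := by
    have : 1 + 1 / z = (z + 1) / z := by field_simp
    rw [aux_log_Rfun hz, aux_log_Rfun hz1, aux_log_Gamma_succ hz1, this,
      Real.log_div hz1.ne' hz.ne']
    ring
  have hp : 0 < 1 / z := by positivity
  have l := Real.le_log_one_add_of_nonneg hp.le
  have u : Real.log (1 + 1 / z) ≤ ((1 + 1 / z) - (1 + 1 / z)⁻¹) / 2 := by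
    rw [← Real.sinh_log (by linarith)]
    exact Real.self_le_sinh_iff.2 (Real.log_nonneg (by linarith))
  have hh : 0 < z + 1 / 2 := by linarith
  rw [e]
  constructor
  · have := mul_le_mul_of_nonneg_left l hh.le
    have e2 : (z + 1 / 2) * (2 * (1 / z) / (1 / z + 2)) = 1 := by field_simp; ring
    linarith
  · have := mul_le_mul_of_nonneg_left u hh.le
    have e2 : (z + 1 / 2) * (((1 + 1 / z) - (1 + 1 / z)⁻¹) / 2)
        = 1 + 1 / 4 * (1 / z - 1 / (z + 1)) := by
      have : (1 + 1 / z)⁻¹ = z / (z + 1) := by field_simp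
      rw [this]; field_simp; ring
    linarith

lemma aux_tele {z : ℝ} (hz : 0 < z) (n : ℕ) :
    0 ≤ Real.log (Rfun (z + n)) - Real.log (Rfun z) ∧
    Real.log (Rfun (z + n)) - Real.log (Rfun z) ≤ 1 / 4 * (1 / z - 1 / (z + n)) := by
  induction n with
  | zero => simp
  | succ n ih =>
    have := aux_step (show 0 < z + n by positivity)
    push_cast
    rw [← add_assoc]
    constructor <;> linarith [ih.1, ih.2, this.1, this.2]

lemma aux_lim {x : ℝ} (hx : 0 < x) :
    Tendsto (fun n : ℕ => Real.log (Rfun (x + n))) atTop (𝓝 0) := by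
  have h1 := Real.BohrMollerup.tendsto_log_gamma hx
  have h2 : Tendsto (fun n => Real.log (Stirling.stirlingSeq n)) atTop (𝓝 (Real.log √π)) :=
    Stirling.tendsto_stirlingSeq_sqrt_pi.log (by positivity)
  have h3 : Tendsto (fun n : ℕ => (n : ℝ) * Real.log (1 + x / n)) atTop (𝓝 x) :=
    (Real.tendsto_mul_log_one_add_div_atTop x).comp tendsto_natCast_atTop_atTop
  have h4 : Tendsto (fun n : ℕ => Real.log (1 + x / n)) atTop (𝓝 0) := by
    have : Tendsto (fun n : ℕ => 1 + x / (n : ℝ)) atTop (𝓝 (1 + 0)) :=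
      tendsto_const_nhds.add (tendsto_const_div_atTop_nhds_zero_nat x)
    simpa using this.log (by norm_num)
  have h := (((h1.sub_const (Real.log (Real.Gamma x))).sub (h2.sub_const (Real.log √π))).add
    ((h3.sub_const x).add (h4.const_mul (x + 1 / 2))))
  simp only [sub_self, mul_zero, add_zero] at h
  refine h.congr' ?_
  filter_upwards [eventually_ge_atTop 1] with n hn
  have hn0 : (0 : ℝ) < n := by exact_mod_cast hn
  have hG : Real.log (Real.Gamma (x + n + 1)) = Real.log (Real.Gamma x)
      + ∑ m ∈ Finset.range (n + 1), Real.log (x + m) := by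
    have := Real.BohrMollerup.f_add_nat_eq (f := fun y => Real.log (Real.Gamma y))
      (fun {y} hy => aux_log_Gamma_succ hy) hx (n + 1)
    push_cast at this
    rw [← add_assoc] at this
    exact this
  have e1 : 1 + x / n = (x + n) / n := by field_simp; ring
  rw [aux_log_Rfun (by positivity), hG, Stirling.log_stirlingSeq_formula,
    Real.BohrMollerup.logGammaSeq, e1, Real.log_div (by positivity) hn0.ne',
    Real.log_div hn0.ne' (Real.exp_pos _).ne', Real.log_exp, Real.log_sqrt (by positivity),
    Real.log_mul (by norm_num) hn0.ne', Real.log_mul (by norm_num) (by positivity)]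
  ring

lemma aux_bound {z : ℝ} (hz : 0 < z) : |Real.log (Rfun z)| ≤ 1 / z := by
  have h := (aux_lim hz).sub_const (Real.log (Rfun z))
  have a := ge_of_tendsto' h (fun n => (aux_tele hz n).1)
  have b := le_of_tendsto' h (b := 1 / z) (fun n => by
    have h1 := (aux_tele hz n).2
    have h2 : 0 ≤ 1 / (z + n) := by positivity
    have h3 : 0 < 1 / z := by positivity
    linarith)
  rw [abs_le]
  constructor <;> linarith

lemma aux_O {c e : ℝ} (hc : 0 < c) (he : 0 ≤ e) :
    (fun b : ℝ => Real.log (Rfun (c / b + e))) =O[𝓝[>] (0 : ℝ)] (fun b => b) := by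
  refine IsBigO.of_bound (1 / c) ?_
  filter_upwards [self_mem_nhdsWithin] with b hb
  have hb : 0 < b := hb
  have h0 : 0 < c / b := by positivity
  rw [Real.norm_eq_abs, Real.norm_eq_abs, abs_of_pos hb]
  calc _ ≤ 1 / (c / b + e) := aux_bound (by positivity)
    _ ≤ 1 / (c / b) := one_div_le_one_div_of_le h0 (by linarith)
    _ = 1 / c * b := by field_simp

/-- Stirling-ratio product `S_{b,q}(s) = 1 + O_s(b)`. -/
theorem stirling_ratio_product (d : ℕ) (hd : 1 ≤ d) (q : ℝ) (hq : 1 < q)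
    (s : Fin d → ℝ) (hs : s ∈ SdInt d) :
    (fun b : ℝ =>
        (Rfun ((1 - ∑ i, s i) / b) ^ q * ∏ i, Rfun (s i / b) ^ q) /
            (Rfun (q * (1 - ∑ i, s i) / b) * ∏ i, Rfun (q * s i / b)) *
          (Rfun (q / b + d) / Rfun (1 / b + d) ^ q) - 1)
      =O[𝓝[>] (0 : ℝ)] (fun b => b) := by
  obtain ⟨hs1, hs2⟩ := hs
  have hsp : ∀ i, 0 < s i := fun i => (hs1 i).1
  have ha : 0 < 1 - ∑ i, s i := by
    have : ∑ i, s i ≤ ∑ i, |s i| := Finset.sum_le_sum fun i _ => le_abs_self _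
    linarith
  have hq0 : 0 < q := by linarith
  have hd0 : (0 : ℝ) ≤ d := by positivity
  have key : ∀ c : ℝ, 0 < c →
      (fun b : ℝ => Real.log (Rfun (c / b))) =O[𝓝[>] (0 : ℝ)] (fun b => b) := fun c hc => by
    simpa using aux_O hc le_rfl
  have hE := ((((key _ ha).const_mul_left q).add
      (IsBigO.sum (s := Finset.univ) fun i _ => (key _ (hsp i)).const_mul_left q)).sub
      ((key _ (mul_pos hq0 ha)).add
      (IsBigO.sum (s := Finset.univ) fun i _ => key _ (mul_pos hq0 (hsp i))))).add
      ((aux_O hq0 hd0).sub ((aux_O one_pos hd0).const_mul_left q))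
  have h0 : Tendsto (fun b : ℝ => b) (𝓝[>] 0) (𝓝 0) := tendsto_nhdsWithin_of_tendsto_nhds tendsto_id
  have hexp := ((Real.hasDerivAt_exp 0).isBigO_sub.comp_tendsto (hE.trans_tendsto h0))
  simp only [Real.exp_zero, sub_zero] at hexp
  refine (IsBigO.trans hexp hE).congr' ?_ EventuallyEq.rfl
  filter_upwards [self_mem_nhdsWithin] with b hb
  have hb : 0 < b := hb
  have r : ∀ z, 0 < z → Real.exp (Real.log (Rfun z)) = Rfun z :=
    fun z hz => Real.exp_log (aux_Rfun_pos hz)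
  have rq : ∀ z, 0 < z → Real.exp (q * Real.log (Rfun z)) = Rfun z ^ q := fun z hz => by
    rw [Real.rpow_def_of_pos (aux_Rfun_pos hz), mul_comm]
  simp only [Function.comp_apply, Finset.sum_apply]
  rw [Real.exp_add, Real.exp_sub, Real.exp_sub, Real.exp_add, Real.exp_add, Real.exp_sum,
    Real.exp_sum, rq _ (div_pos ha hb), rq (1 / b + d) (by positivity),
    r _ (div_pos (mul_pos hq0 ha) hb), r (q / b + d) (by positivity),
    Finset.prod_congr rfl (fun i _ => rq _ (div_pos (hsp i) hb)),
    Finset.prod_congr rfl (fun i _ => r _ (div_pos (mul_pos hq0 (hsp i)) hb))]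
end

section
/- Let d ∈ ℕ and let (X_i)_{i∈ℕ} be a strictly stationary sequence of S_d-valued random vectors whose strong mixing coefficient satisfies α(m) ≪ m^{−ν} for some ν > 1. Let s ∈ Int(S_d), let b = b(n) → 0, and let (β_n) be integers with 1 ≤ β_n ≤ n−1. Then the far-off-diagonal covariance sum C_{2,n} = Σ_{β_n+1 ≤ |i−j| ≤ n−1, 1 ≤ i,j ≤ n} Cov(κ_{s,b}(X_i), κ_{s,b}(X_j)) satisfies |C_{2,n}| ≪_s n b^{−d} β_n^{−ν+1} as n → ∞. -/
open MeasureTheory Filter Asymptotics Real Topology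

lemma aux_log_fact : ∃ C : ℝ, ∀ n : ℕ, 1 ≤ n →
    |Real.log (n.factorial) - ((n + 1/2) * Real.log n - n)| ≤ C := by
  refine ⟨|Real.log (√π)| + |Real.log (Stirling.stirlingSeq 1)| + Real.log 2, fun n hn => ?_⟩
  have hn0 : (0:ℝ) < n := by exact_mod_cast hn
  have h1 := Stirling.log_stirlingSeq_formula n
  have h2 : Real.log (√π) ≤ Real.log (Stirling.stirlingSeq n) :=
    Real.log_le_log (by positivity) (Stirling.sqrt_pi_le_stirlingSeq (by omega))
  have h3 : Real.log (Stirling.stirlingSeq n) ≤ Real.log (Stirling.stirlingSeq 1) := by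
    obtain ⟨m, rfl⟩ : ∃ m, n = m + 1 := ⟨n - 1, by omega⟩
    exact Real.log_le_log (Stirling.stirlingSeq'_pos m) (Stirling.stirlingSeq'_antitone (Nat.zero_le m))
  rw [Real.log_mul (by norm_num) hn0.ne', Real.log_div hn0.ne' (by positivity), Real.log_exp] at h1
  have h4 : Real.log (n.factorial) - ((n + 1/2) * Real.log n - n)
      = Real.log (Stirling.stirlingSeq n) + 1/2 * Real.log 2 := by rw [h1]; ring
  rw [h4]
  have h5 : 0 < Real.log 2 := Real.log_pos (by norm_num)
  rw [abs_le]
  constructor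
  · linarith [neg_abs_le (Real.log (√π)), abs_nonneg (Real.log (Stirling.stirlingSeq 1))]
  · linarith [le_abs_self (Real.log (Stirling.stirlingSeq 1)), abs_nonneg (Real.log (√π))]

lemma aux_log_gamma : ∃ C : ℝ, ∀ x : ℝ, 1 ≤ x →
    |Real.log (Real.Gamma (x + 1)) - ((x + 1/2) * Real.log x - x)| ≤ C := by
  obtain ⟨C, hC⟩ := aux_log_fact
  refine ⟨C + 5, fun x hx => ?_⟩
  obtain ⟨n, hn⟩ : ∃ n, n = ⌊x⌋₊ := ⟨_, rfl⟩
  have hn1 : 1 ≤ n := by rw [hn]; exact Nat.le_floor (by simpa using hx)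
  have hnx : (n:ℝ) ≤ x := by rw [hn]; exact Nat.floor_le (by linarith)
  have hxn : x < n + 1 := by rw [hn]; exact Nat.lt_floor_add_one x
  have hn1' : (1:ℝ) ≤ n := by exact_mod_cast hn1
  have hn0 : (0:ℝ) < n := by linarith
  have hfeq : ∀ {y : ℝ}, 0 < y → (Real.log ∘ Real.Gamma) (y + 1)
      = (Real.log ∘ Real.Gamma) y + Real.log y := by
    intro y hy
    simp only [Function.comp]
    rw [Real.Gamma_add_one hy.ne', Real.log_mul hy.ne' (Real.Gamma_pos_of_pos hy).ne', add_comm]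
  have hC' := hC n hn1
  rcases hnx.eq_or_lt with h | h
  · rw [← h, Real.Gamma_nat_eq_factorial]; linarith
  have hu := Real.BohrMollerup.f_add_nat_le (n := n + 1) Real.convexOn_log_Gamma hfeq (by omega)
    (sub_pos.2 h) (by linarith)
  have hl := Real.BohrMollerup.f_add_nat_ge (n := n + 1) Real.convexOn_log_Gamma hfeq (by omega)
    (sub_pos.2 h)
  simp only [Function.comp, Nat.cast_add, Nat.cast_one, Real.Gamma_nat_eq_factorial,
    add_sub_cancel_right] at hu hl
  rw [show (n:ℝ) + 1 + (x - n) = x + 1 by ring] at hu hl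
  have l1 : Real.log (n + 1) ≤ Real.log n + 1 / n := by
    have := Real.log_le_sub_one_of_pos (x := (n + 1) / n) (by positivity)
    rw [Real.log_div (by positivity) hn0.ne', show ((n:ℝ) + 1) / n - 1 = 1 / n by field_simp; ring] at this
    linarith
  have l2 : Real.log x ≤ Real.log n + 1 / n := 
    (Real.log_le_log (by linarith) hxn.le).trans l1
  have l3 : Real.log n ≤ Real.log x := Real.log_le_log hn0 hnx
  have l4 : 1 / (n:ℝ) ≤ 1 := by rw [div_le_one hn0]; exact hn1'
  have l5 : (x - n) * Real.log (n+1) ≤ (x - n) * Real.log n + 1 := by nlinarith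
  have l6 : (x + 1/2) * (Real.log x - Real.log n) ≤ 3 := by
    calc _ ≤ (3 * (n:ℝ)) * (1 / (n:ℝ)) := by
          apply mul_le_mul <;> first | linarith | positivity
      _ = 3 := by field_simp
  have l7 : 0 ≤ (x + 1/2) * (Real.log x - Real.log n) := mul_nonneg (by linarith) (by linarith)
  rw [abs_le] at hC' ⊢
  constructor <;> nlinarith

lemma aux_gamma_shift (N : ℝ) (hN : 1 ≤ N) (d k : ℕ) (hk : k ≤ d) :
    Real.Gamma (N + k + 1) ≤ ((d + 1) * N) ^ k * Real.Gamma (N + 1) := by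
  induction k with
  | zero => simp
  | succ k ih =>
    have ih := ih (by omega)
    have hk' : (k:ℝ) + 1 ≤ d := by exact_mod_cast hk
    have h0 : (0:ℝ) ≤ k := by positivity
    have hG := Real.Gamma_pos_of_pos (s := N + 1) (by linarith)
    push_cast
    rw [← add_assoc, Real.Gamma_add_one (by positivity), pow_succ, mul_right_comm, mul_comm]
    gcongr
    nlinarith

lemma aux_dir_s10 {ι : Type*} [Fintype ι] (p : ι → ℝ) (hp : ∀ i, 0 < p i) (hp1 : ∑ i, p i = 1)
    (d : ℕ) (hc : Fintype.card ι = d + 1) :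
    ∃ C : ℝ, 0 < C ∧ ∀ N : ℝ, 1 ≤ N → (∀ i, 1 ≤ p i * N) → ∀ y : ι → ℝ, (∀ i, 0 ≤ y i) → 
      ∑ i, y i = 1 →
      Real.Gamma (N + d + 1) / (∏ i, Real.Gamma (p i * N + 1)) * ∏ i, y i ^ (p i * N)
        ≤ C * N ^ ((d:ℝ) / 2) := by
  obtain ⟨C, hC⟩ := aux_log_gamma
  refine ⟨(d+1) ^ d * Real.exp ((d + 2) * C - 1 / 2 * ∑ i, Real.log (p i)), by positivity, ?_⟩
  intro N hN hpN y hy hy1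
  have hN0 : 0 < N := by linarith
  have hG : ∀ i, 0 < Real.Gamma (p i * N + 1) := fun i =>
    Real.Gamma_pos_of_pos (by linarith [hpN i])
  have hGN : 0 < Real.Gamma (N + 1) := Real.Gamma_pos_of_pos (by linarith)
  have gibbs : ∏ i, y i ^ (p i * N) ≤ ∏ i, p i ^ (p i * N) := by
    have h := Real.geom_mean_le_arith_mean_weighted Finset.univ p (fun i => y i / p i)
      (fun i _ => (hp i).le) hp1 (fun i _ => div_nonneg (hy i) (hp i).le)
    have h2 : ∑ i, p i * (y i / p i) = 1 := by
      rw [← hy1]; exact Finset.sum_congr rfl fun i _ => by field_simp [(hp i).ne']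
    rw [h2] at h
    have h3 : ∏ i, (y i / p i) ^ (p i * N) ≤ 1 := by
      have : ∏ i, (y i / p i) ^ (p i * N) = (∏ i, (y i / p i) ^ p i) ^ N := by
        rw [← Real.finsetProd_rpow _ _ (fun i _ => Real.rpow_nonneg (div_nonneg (hy i) (hp i).le) _)]
        exact Finset.prod_congr rfl fun i _ => Real.rpow_mul (div_nonneg (hy i) (hp i).le) _ _
      rw [this]
      exact Real.rpow_le_one (Finset.prod_nonneg fun i _ =>
        Real.rpow_nonneg (div_nonneg (hy i) (hp i).le) _) h hN0.le
    have h4 : ∏ i, y i ^ (p i * N) = (∏ i, (y i / p i) ^ (p i * N)) * ∏ i, p i ^ (p i * N) := by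
      rw [← Finset.prod_mul_distrib]
      refine Finset.prod_congr rfl fun i _ => ?_
      rw [← Real.mul_rpow (div_nonneg (hy i) (hp i).le) (hp i).le, div_mul_cancel₀ _ (hp i).ne']
    rw [h4]
    exact mul_le_of_le_one_left (Finset.prod_nonneg fun i _ => Real.rpow_nonneg (hp i).le _) h3
  have main : Real.Gamma (N + 1) / (∏ i, Real.Gamma (p i * N + 1)) * ∏ i, p i ^ (p i * N)
      ≤ Real.exp ((d + 2) * C - 1 / 2 * ∑ i, Real.log (p i)) * N ^ (-(d:ℝ) / 2) := by
    have hP : 0 < ∏ i, Real.Gamma (p i * N + 1) := Finset.prod_pos fun i _ => hG i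
    have hQ : 0 < ∏ i, p i ^ (p i * N) := Finset.prod_pos fun i _ => Real.rpow_pos_of_pos (hp i) _
    rw [← Real.log_le_log_iff (by positivity) (by positivity),
      Real.log_mul (by positivity) (by positivity), Real.log_mul (by positivity) (by positivity),
      Real.log_div (by positivity) (by positivity), Real.log_exp, Real.log_rpow hN0,
      Real.log_prod (fun i _ => (hG i).ne'), Real.log_prod 
        (fun i _ => (Real.rpow_pos_of_pos (hp i) _).ne')]
    have e1 := (abs_le.1 (hC N hN)).2
    have e2 : ∑ i, Real.log (p i ^ (p i * N)) - ∑ i, Real.log (Real.Gamma (p i * N + 1)) 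
        ≤ ∑ i, (C + N * p i - Real.log N * N * p i - 1/2 * Real.log N - 1/2 * Real.log (p i)) := by
      rw [← Finset.sum_sub_distrib]
      refine Finset.sum_le_sum fun i _ => ?_
      have := (abs_le.1 (hC _ (hpN i))).1
      rw [Real.log_mul (hp i).ne' hN0.ne'] at this
      rw [Real.log_rpow (hp i)]
      nlinarith
    have e3 : ∑ i, (C + N * p i - Real.log N * N * p i - 1/2 * Real.log N - 1/2 * Real.log (p i))
        = (d + 1) * C + N - Real.log N * N - (d+1) / 2 * Real.log N 
          - 1 / 2 * ∑ i, Real.log (p i) := by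
      simp only [Finset.sum_sub_distrib, Finset.sum_add_distrib, ← Finset.mul_sum, hp1,
        Finset.sum_const, Finset.card_univ, hc, nsmul_eq_mul]
      push_cast; ring
    rw [e3] at e2
    linarith
  have hP : 0 < ∏ i, Real.Gamma (p i * N + 1) := Finset.prod_pos fun i _ => hG i
  calc _ ≤ (((d + 1) * N) ^ d * Real.Gamma (N + 1)) / (∏ i, Real.Gamma (p i * N + 1)) *
        ∏ i, p i ^ (p i * N) := by
        gcongr
        · exact Finset.prod_nonneg fun i _ => Real.rpow_nonneg (hy i) _
        · exact aux_gamma_shift N hN d d le_rfl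
    _ = ((d + 1) * N) ^ d * (Real.Gamma (N + 1) / (∏ i, Real.Gamma (p i * N + 1)) *
        ∏ i, p i ^ (p i * N)) := by ring
    _ ≤ ((d + 1) * N) ^ d * (Real.exp ((d + 2) * C - 1 / 2 * ∑ i, Real.log (p i)) 
        * N ^ (-(d:ℝ) / 2)) := by gcongr
    _ = _ := by
      have : N ^ ((d:ℝ)/2) = N ^ d * N ^ (-(d:ℝ) / 2) := by
        rw [← Real.rpow_natCast, ← Real.rpow_add hN0]; congr 1; ring
      rw [this, mul_pow]; ring

lemma aux_layer {Ω : Type*} [MeasurableSpace Ω] (P : Measure Ω) [IsProbabilityMeasure P]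
    (g h : Ω → ℝ) (M a : ℝ) (hM : 0 ≤ M) (hg : Measurable g) (hg0 : ∀ ω, 0 ≤ g ω) 
    (hgM : ∀ ω, g ω ≤ M) (hh : Integrable h P)
    (H : ∀ u : ℝ, |∫ ω in {ω | u < g ω}, h ω ∂P| ≤ a) : |∫ ω, g ω * h ω ∂P| ≤ M * a := by
  have hS : MeasurableSet {z : Ω × ℝ | z.2 < g z.1} :=
    measurableSet_lt measurable_snd (hg.comp measurable_fst)
  have key : ∀ ω, g ω * h ω = ∫ u in Set.Ioc 0 M, 
      ({z : Ω × ℝ | z.2 < g z.1}.indicator (fun z => h z.1)) (ω, u) := by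
    intro ω
    have : ∀ u, ({z : Ω × ℝ | z.2 < g z.1}.indicator (fun z => h z.1)) (ω, u)
        = (Set.Iio (g ω)).indicator (fun _ => h ω) u := by
      intro u; simp [Set.indicator]
    simp_rw [this]
    rw [setIntegral_indicator measurableSet_Iio, setIntegral_const]
    have : Set.Ioc 0 M ∩ Set.Iio (g ω) = Set.Ioo 0 (g ω) := by
      ext u
      simp only [Set.mem_inter_iff, Set.mem_Ioc, Set.mem_Iio, Set.mem_Ioo]
      exact ⟨fun h => ⟨h.1.1, h.2⟩, fun h => ⟨⟨h.1, h.2.le.trans (hgM ω)⟩, h.2⟩⟩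
    rw [this]; simp [Measure.real, hg0 ω]
  have hint : Integrable ({z : Ω × ℝ | z.2 < g z.1}.indicator (fun z : Ω × ℝ => h z.1))
      (P.prod (volume.restrict (Set.Ioc 0 M))) := by
    apply Integrable.indicator _ hS
    exact hh.comp_fst _
  simp_rw [key]
  rw [integral_integral_swap (f := fun ω u => 
    ({z : Ω × ℝ | z.2 < g z.1}.indicator (fun z => h z.1)) (ω, u)) hint]
  have hb : ∀ u ∈ Set.Ioc 0 M, ‖∫ ω, ({z : Ω × ℝ | z.2 < g z.1}.indicator (fun z => h z.1)) (ω, u) ∂P‖ ≤ a := by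
    intro u _
    have : ∀ ω, ({z : Ω × ℝ | z.2 < g z.1}.indicator (fun z => h z.1)) (ω, u)
        = {ω | u < g ω}.indicator h ω := by
      intro ω; simp [Set.indicator]
    simp_rw [this]
    rw [integral_indicator (measurableSet_lt measurable_const hg)]
    exact H u
  have := norm_setIntegral_le_of_norm_le_const (μ := volume) (s := Set.Ioc 0 M) (by simp) hb
  simpa [Measure.real, hM, mul_comm] using this

lemma aux_cov {Ω : Type*} [MeasurableSpace Ω] (P : Measure Ω) [IsProbabilityMeasure P]
    (f g : Ω → ℝ) (M a : ℝ) (hM : 0 ≤ M) (hf : Measurable f) (hf0 : ∀ ω, 0 ≤ f ω) 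
    (hfM : ∀ ω, f ω ≤ M) (hg : Measurable g) (hg0 : ∀ ω, 0 ≤ g ω) 
    (hgM : ∀ ω, g ω ≤ M) 
    (H : ∀ t u : ℝ, |(P ({ω | t < f ω} ∩ {ω | u < g ω})).toReal
      - (P {ω | t < f ω}).toReal * (P {ω | u < g ω}).toReal| ≤ a) :
    |∫ ω, f ω * g ω ∂P - (∫ ω, f ω ∂P) * (∫ ω, g ω ∂P)| ≤ M ^ 2 * a := by
  have ig : Integrable g P := Integrable.of_bound hg.aestronglyMeasurable M
    (ae_of_all _ fun ω => by rw [Real.norm_of_nonneg (hg0 ω)]; exact hgM ω)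
  have jf : Integrable f P := Integrable.of_bound hf.aestronglyMeasurable M
    (ae_of_all _ fun ω => by rw [Real.norm_of_nonneg (hf0 ω)]; exact hfM ω)
  have ifg : Integrable (fun ω => f ω * g ω) P := ig.bdd_mul hf.aestronglyMeasurable
    (ae_of_all _ fun ω => by rw [Real.norm_of_nonneg (hf0 ω)]; exact hfM ω)
  have h2 := aux_layer P f (fun ω => g ω - ∫ ω, g ω ∂P) M (M * a) hM hf hf0 hfM
    (ig.sub (integrable_const _)) ?_
  · have : ∫ ω, f ω * (g ω - ∫ ω, g ω ∂P) ∂P = ∫ ω, f ω * g ω ∂P - (∫ ω, f ω ∂P) * (∫ ω, g ω ∂P) := by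
      simp_rw [mul_sub]
      rw [integral_sub ifg (jf.mul_const _), integral_mul_const]
    rw [this] at h2
    calc _ ≤ _ := h2
      _ = _ := by ring
  intro t
  have hA : MeasurableSet {ω | t < f ω} := measurableSet_lt measurable_const hf
  have iA : Integrable ({ω | t < f ω}.indicator (fun _ => (1:ℝ))) P := (integrable_const _).indicator hA
  have h1 := aux_layer P g (fun ω => {ω | t < f ω}.indicator (fun _ => (1:ℝ)) ω - P.real {ω | t < f ω})
    M a hM hg hg0 hgM (iA.sub (integrable_const _)) ?_
  · have e : ∫ ω, g ω * ({ω | t < f ω}.indicator (fun _ => (1:ℝ)) ω - P.real {ω | t < f ω}) ∂P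
      = ∫ ω in {ω | t < f ω}, (g ω - ∫ ω, g ω ∂P) ∂P := by
      have e1 : ∀ ω, g ω * {ω | t < f ω}.indicator (fun _ => (1:ℝ)) ω = {ω | t < f ω}.indicator g ω := by
        intro ω; by_cases h : t < f ω <;> simp [Set.indicator, h]
      simp_rw [mul_sub, e1]
      rw [integral_sub (ig.indicator hA) (ig.mul_const _), integral_mul_const, integral_indicator hA,
        integral_sub ig.integrableOn (integrable_const _), setIntegral_const]
      simp [mul_comm]
    rw [← e]; exact h1
  intro u
  have hB : MeasurableSet {ω | u < g ω} := measurableSet_lt measurable_const hg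
  rw [integral_sub iA.integrableOn (integrable_const _), setIntegral_indicator hA, setIntegral_const,
    setIntegral_const]
  have := H t u
  simpa [Measure.real, Set.inter_comm, mul_comm] using this

lemma aux_tail (ν : ℝ) (hν : 1 < ν) (β n : ℕ) (hβ : 1 ≤ β) (hn : β ≤ n) :
    ∑ k ∈ Finset.Ico β n, ((k + 1 : ℕ) : ℝ) ^ (-ν) ≤ (β:ℝ) ^ (-ν + 1) / (ν - 1) := by
  have hβ' : (1:ℝ) ≤ β := by exact_mod_cast hβ
  have hn' : (β:ℝ) ≤ n := by exact_mod_cast hn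
  have h := AntitoneOn.sum_le_integral_Ico (f := fun x : ℝ => x ^ (-ν)) hn ?_
  · refine h.trans ?_
    rw [integral_rpow]
    · have h1 : (0:ℝ) ≤ (n:ℝ) ^ (-ν + 1) := by positivity
      rw [← neg_div_neg_eq, neg_add, neg_neg, ← sub_eq_add_neg]
      gcongr
      · linarith
    · right
      constructor
      · linarith
      · rw [Set.uIcc_of_le hn']; simp; intro; linarith
  · intro x hx y hy hxy
    exact Real.rpow_le_rpow_of_nonpos (by linarith [hx.1]) hxy (by linarith)

lemma aux_row (c : ℕ → ℝ) (hc : ∀ k, 0 ≤ c k) (β n i : ℕ) :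
    ∑ j ∈ Finset.Icc 1 n, (if β + 1 ≤ Nat.dist i j ∧ Nat.dist i j ≤ n - 1 then
      c (Nat.dist i j) else 0) ≤ 2 * ∑ k ∈ Finset.Ico β n, c (k + 1) := by
  have h : ∀ j ∈ Finset.Icc 1 n, (if β + 1 ≤ Nat.dist i j ∧ Nat.dist i j ≤ n - 1 then
      c (Nat.dist i j) else 0) ≤ ∑ k ∈ Finset.Ico β n, ((if i + (k+1) = j then c (k+1) else 0)
        + (if i - (k+1) = j then c (k+1) else 0)) := by
    intro j hj
    have hnn : ∀ k, 0 ≤ ((if i + (k+1) = j then c (k+1) else 0)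
        + (if i - (k+1) = j then c (k+1) else 0)) := by
      intro k; have := hc (k+1); split_ifs <;> linarith
    split_ifs with hd
    · have hk : Nat.dist i j - 1 ∈ Finset.Ico β n := by simp; omega
      refine le_trans ?_ (Finset.single_le_sum (fun k _ => hnn k) hk)
      rw [Nat.sub_add_cancel (by omega)]
      have := hc (Nat.dist i j)
      rcases le_total i j with hij | hij
      · rw [if_pos (by rw [Nat.dist_eq_sub_of_le hij]; omega)]
        split_ifs <;> linarith
      · rw [if_pos (c := i - _ = j) (by rw [Nat.dist_eq_sub_of_le_right hij]; omega)]
        split_ifs <;> linarith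
    · exact Finset.sum_nonneg fun k _ => hnn k
  refine (Finset.sum_le_sum h).trans ?_
  rw [Finset.sum_comm, Finset.mul_sum]
  refine Finset.sum_le_sum fun k _ => ?_
  rw [Finset.sum_add_distrib, Finset.sum_ite_eq, Finset.sum_ite_eq]
  have := hc (k+1)
  split_ifs <;> linarith

lemma aux_kappa (d : ℕ) (s : Fin d → ℝ) (hs : s ∈ SdInt d) :
    ∃ C : ℝ, 0 < C ∧ ∃ b0 : ℝ, 0 < b0 ∧ ∀ b : ℝ, 0 < b → b < b0 → ∀ x ∈ Sd d,
      0 ≤ kappa d s b x ∧ kappa d s b x ≤ C * b ^ (-(d:ℝ) / 2) := by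
  obtain ⟨hs1, hs2⟩ := hs
  have hss : ∑ i, s i < 1 := by
    refine lt_of_le_of_lt (Finset.sum_le_sum fun i _ => le_abs_self _) hs2
  let p : Option (Fin d) → ℝ := fun o => o.elim (1 - ∑ i, s i) s
  have hp : ∀ i, 0 < p i := by
    intro i
    cases i with
    | none => simp only [p, Option.elim]; linarith
    | some i => exact (hs1 i).1
  obtain ⟨C, hC0, hC⟩ := aux_dir_s10 p hp (by simp [p, Fintype.sum_option]) d (by simp)
  have hne : (Finset.univ : Finset (Option (Fin d))).Nonempty := Finset.univ_nonempty
  obtain ⟨i0, _, hi0⟩ := Finset.exists_min_image Finset.univ p hne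
  refine ⟨C, hC0, min 1 (p i0), lt_min one_pos (hp i0), ?_⟩
  intro b hb hbb x hx
  obtain ⟨hx1, hx2⟩ := hx
  have hxs : ∑ i, x i ≤ 1 := (Finset.sum_le_sum fun i _ => le_abs_self _).trans hx2
  have hb1 : b < 1 := lt_of_lt_of_le hbb (min_le_left _ _)
  have hb2 : ∀ i, b < p i := fun i => 
    lt_of_lt_of_le (lt_of_lt_of_le hbb (min_le_right _ _)) (hi0 i (Finset.mem_univ _))
  let y : Option (Fin d) → ℝ := fun o => o.elim (1 - ∑ i, x i) x
  have hy : ∀ i, 0 ≤ y i := by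
    intro i
    cases i with
    | none => simp only [y, Option.elim]; linarith
    | some i => exact (hx1 i).1
  have hk : kappa d s b x = Real.Gamma (b⁻¹ + d + 1) / (∏ i, Real.Gamma (p i * b⁻¹ + 1)) 
      * ∏ i, y i ^ (p i * b⁻¹) := by
    have e : ∑ i, (s i / b + 1) + ((1 - ∑ i, s i) / b + 1) = b⁻¹ + d + 1 := by
      rw [Finset.sum_add_distrib, ← Finset.sum_div]; simp; ring
    simp only [kappa, dirK]
    rw [e, Fintype.prod_option, Fintype.prod_option]
    simp only [p, y, Option.elim, div_eq_mul_inv, add_sub_cancel_right]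
    ring
  have hG : ∀ i, 0 < Real.Gamma (p i * b⁻¹ + 1) := fun i =>
    Real.Gamma_pos_of_pos (by have := hp i; positivity)
  have hbi : b ^ (-(d:ℝ)/2) = b⁻¹ ^ ((d:ℝ)/2) := by
    rw [Real.inv_rpow hb.le, neg_div, Real.rpow_neg hb.le]
  constructor
  · rw [hk]
    have hg2 : 0 ≤ Real.Gamma (b⁻¹ + d + 1) := (Real.Gamma_pos_of_pos (by positivity)).le
    exact mul_nonneg (div_nonneg hg2 (Finset.prod_nonneg fun i _ => (hG i).le))
      (Finset.prod_nonneg fun i _ => Real.rpow_nonneg (hy i) _)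
  · rw [hk, hbi]
    refine hC _ (one_le_inv₀ hb |>.2 hb1.le) (fun i => ?_) y hy (by simp [y, Fintype.sum_option])
    rw [← div_eq_mul_inv, one_le_div hb]; exact (hb2 i).le

lemma aux_kappa_meas (d : ℕ) (s : Fin d → ℝ) (b : ℝ) : Measurable (kappa d s b) := by
  unfold kappa dirK
  fun_prop

lemma aux_mix {Ω : Type*} [MeasurableSpace Ω] (P : Measure Ω) [IsProbabilityMeasure P] {d : ℕ}
    (X : ℕ → Ω → (Fin d → ℝ)) (k j : ℕ) (hk : 1 ≤ k) (hkj : k ≤ j)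
    (f : (Fin d → ℝ) → ℝ) (hf : Measurable f) (t u : ℝ) :
    |(P ({ω | t < f (X k ω)} ∩ {ω | u < f (X j ω)})).toReal
      - (P {ω | t < f (X k ω)}).toReal * (P {ω | u < f (X j ω)}).toReal| 
      ≤ alphaMix P X (j - k) := by
  unfold alphaMix
  apply le_csSup
  · refine ⟨1, ?_⟩
    rintro r ⟨k, _, A, B, _, _, rfl⟩
    have h1 : ∀ A, 0 ≤ (P A).toReal ∧ (P A).toReal ≤ 1 := fun A =>
      ⟨ENNReal.toReal_nonneg, measureReal_le_one⟩
    have hA := h1 A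
    have hB := h1 B
    have hAB := h1 (A ∩ B)
    have := mul_nonneg hA.1 hB.1
    have := mul_le_one₀ hA.2 hB.1 hB.2
    rw [abs_le]; constructor <;> linarith
  · refine ⟨k, hk, _, _, ?_, ?_, rfl⟩
    · have : MeasurableSpace.comap (X k) inferInstance ≤ 
        ⨆ i ∈ Set.Icc 1 k, MeasurableSpace.comap (X i) inferInstance := 
        le_iSup₂_of_le k (by simp [hk]) le_rfl
      apply this
      exact ⟨{x | t < f x}, measurableSet_lt measurable_const hf, rfl⟩
    · have : MeasurableSpace.comap (X j) inferInstance ≤ 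
        ⨆ i ∈ Set.Ici (k + (j - k)), MeasurableSpace.comap (X i) inferInstance := 
        le_iSup₂_of_le j (by simp [hkj]) le_rfl
      apply this
      exact ⟨{x | u < f x}, measurableSet_lt measurable_const hf, rfl⟩

/-- Far-off-diagonal covariance sum bound `|C_{2,n}| ≪_s n b^{-d} β_n^{-ν+1}`. -/
theorem far_off_diagonal_cov_sum_bound {Ω : Type*} [MeasurableSpace Ω]
    (P : Measure Ω) [IsProbabilityMeasure P] (d : ℕ) (hd : 1 ≤ d)
    (X : ℕ → Ω → (Fin d → ℝ)) (hmeas : ∀ i, Measurable (X i))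
    (hval : ∀ i ω, X i ω ∈ Sd d)
    (hstat : IsStrictlyStationary P X)
    (ν : ℝ) (hν : 1 < ν)
    (hA3 : (fun m : ℕ => alphaMix P X m) =O[atTop] fun m : ℕ => (m : ℝ) ^ (-ν))
    (s : Fin d → ℝ) (hs : s ∈ SdInt d)
    (b : ℕ → ℝ) (hbpos : ∀ n, 0 < b n) (hb0 : Tendsto b atTop (𝓝 0))
    (β : ℕ → ℕ) (hβ : ∀ n : ℕ, 2 ≤ n → 1 ≤ β n ∧ β n ≤ n - 1) :
    (fun n : ℕ => ∑ i ∈ Finset.Icc 1 n, ∑ j ∈ Finset.Icc 1 n,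
        if β n + 1 ≤ Nat.dist i j ∧ Nat.dist i j ≤ n - 1 then
          cov P (fun ω => kappa d s (b n) (X i ω)) (fun ω => kappa d s (b n) (X j ω))
        else 0)
      =O[atTop]
      (fun n : ℕ => (n : ℝ) * (b n) ^ (-(d : ℝ)) * (β n : ℝ) ^ (-ν + 1)) := by
  obtain ⟨C, hC0, b0, hb0', hK⟩ := aux_kappa d s hs
  obtain ⟨A, hA0, hA⟩ := bound_of_isBigO_nat_atTop hA3
  have hα : ∀ m : ℕ, 1 ≤ m → alphaMix P X m ≤ A * (m:ℝ) ^ (-ν) := by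
    intro m hm
    have hm0 : (0:ℝ) < m := by exact_mod_cast hm
    have h := hA (x := m) (Real.rpow_pos_of_pos hm0 _).ne'
    rw [Real.norm_of_nonneg (r := (m:ℝ) ^ (-ν)) (by positivity)] at h
    exact (Real.le_norm_self _).trans h
  refine IsBigO.of_bound (C ^ 2 * A * (2 / (ν - 1))) ?_
  filter_upwards [hb0.eventually (gt_mem_nhds hb0'), eventually_ge_atTop 2] with n hbn hn
  obtain ⟨hβ1, hβ2⟩ := hβ n hn
  have hKn := hK (b n) (hbpos n) hbn
  set M := C * (b n) ^ (-(d:ℝ)/2) with hMdef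
  have hbp := hbpos n
  have hM : 0 ≤ M := by positivity
  have hkm := aux_kappa_meas d s (b n)
  have hcov : ∀ i j : ℕ, 1 ≤ i → i < j →
      |cov P (fun ω => kappa d s (b n) (X i ω)) (fun ω => kappa d s (b n) (X j ω))|
        ≤ M ^ 2 * (A * (Nat.dist i j : ℝ) ^ (-ν)) := by
    intro i j hi hij
    have h := aux_cov P (fun ω => kappa d s (b n) (X i ω)) (fun ω => kappa d s (b n) (X j ω))
      M (alphaMix P X (j - i)) hM (hkm.comp (hmeas i)) (fun ω => (hKn _ (hval i ω)).1)
      (fun ω => (hKn _ (hval i ω)).2) (hkm.comp (hmeas j)) (fun ω => (hKn _ (hval j ω)).1)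
      (fun ω => (hKn _ (hval j ω)).2) (aux_mix P X i j hi hij.le _ hkm)
    refine h.trans ?_
    rw [Nat.dist_eq_sub_of_le hij.le]
    exact mul_le_mul_of_nonneg_left (hα (j - i) (by omega)) (by positivity)
  have hcov2 : ∀ i j : ℕ, 1 ≤ i → 1 ≤ j → i ≠ j →
      |cov P (fun ω => kappa d s (b n) (X i ω)) (fun ω => kappa d s (b n) (X j ω))|
        ≤ M ^ 2 * (A * (Nat.dist i j : ℝ) ^ (-ν)) := by
    intro i j hi hj hij
    rcases lt_or_gt_of_ne hij with h | h
    · exact hcov i j hi h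
    · have := hcov j i hj h
      rw [Nat.dist_comm]
      refine le_trans (le_of_eq ?_) this
      simp only [cov]
      congr 2
      · simp_rw [mul_comm]
      · rw [mul_comm]
  have hrow : ∀ i ∈ Finset.Icc 1 n, |∑ j ∈ Finset.Icc 1 n,
        if β n + 1 ≤ Nat.dist i j ∧ Nat.dist i j ≤ n - 1 then
          cov P (fun ω => kappa d s (b n) (X i ω)) (fun ω => kappa d s (b n) (X j ω))
        else 0| ≤ M ^ 2 * A * (2 * ((β n : ℝ) ^ (-ν + 1) / (ν - 1))) := by
    intro i hi
    refine (Finset.abs_sum_le_sum_abs _ _).trans ?_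
    have h1 := aux_row (fun k => M ^ 2 * (A * (k : ℝ) ^ (-ν))) (fun k => by positivity) (β n) n i
    have h2 := aux_tail ν hν (β n) n hβ1 (by omega)
    calc _ ≤ _ := Finset.sum_le_sum (fun j hj => ?_)
      _ ≤ _ := h1
      _ = M ^ 2 * A * (2 * ∑ k ∈ Finset.Ico (β n) n, ((k + 1 : ℕ) : ℝ) ^ (-ν)) := by
        simp only [Finset.mul_sum]
        exact Finset.sum_congr rfl fun k _ => by ring
      _ ≤ _ := by gcongr
    split_ifs with hd
    · rw [Finset.mem_Icc] at hi hj
      refine hcov2 i j hi.1 hj.1 ?_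
      rintro rfl
      rw [Nat.dist_self] at hd
      omega
    · simp
  have hM2 : M ^ 2 = C ^ 2 * (b n) ^ (-(d:ℝ)) := by
    rw [hMdef, mul_pow, ← Real.rpow_natCast ((b n) ^ _), ← Real.rpow_mul hbp.le]
    congr 2; push_cast; ring
  rw [Real.norm_eq_abs, Real.norm_of_nonneg (by positivity)]
  refine (Finset.abs_sum_le_sum_abs _ _).trans ((Finset.sum_le_sum hrow).trans (le_of_eq ?_))
  rw [Finset.sum_const, Nat.card_Icc, hM2, nsmul_eq_mul]
  simp only [Nat.add_sub_cancel]
  ring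
end
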